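/- Fix φ and φ_i as in the context. There exists a constant C such that for all sequences (f_i)_{i∈ℤ} and (g_j)_{j∈ℤ} of square-integrable functions on ℝ with Σ_i ‖f_i‖_{L^2}^2 < ∞ and Σ_j ‖g_j‖_{L^2}^2 < ∞, every jump collection (N_k)_{k≥0}, and every λ > 0: ∫_ℝ #{ k ≥ 1 : |Σ_{N_{k−1}(x) < i < j ≤ N_k(x)} (φ_i * f_i)(x) (φ_j * g_j)(x)| > λ } dx ≤ C λ^{−1} (Σ_{i∈ℤ} ‖f_i‖_{L^2}^2)^{1/2} (Σ_{j∈ℤ} ‖g_j‖_{L^2}^2)^{1/2}. -/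

import Mathlib

/-!
Since `∫ φ = 0`, the dyadic averages of `φ_i * f_i` at scale `2⁻ⁿ` are small in `L²` for `n < i`,
and since `φ` is smooth they are close to `φ_i * f_i` for `i ≤ n`, in both cases with a gain of
`2 ^ (-|i - n| / 2)`. By almost orthogonality, the partial sums of the `φ_i * f_i` therefore form a
dyadic martingale up to errors whose squares, summed over all scales, cost at most `∑ ‖f_i‖²`.

The jumps of the paraproduct of two martingales are selected greedily: run the two increments and
the paraproduct from a starting time until the sum of their squares exceeds a small constant, then
reset all three to zero. A long jump either contains such a reset or has large approximation errors
or increments during it, for every choice of the jump collection. Between resets the expected sum of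
squares grows at most by the square variation of the martingales, and every reset destroys a fixed
amount of it, so the number of resets is bounded in mean by the square variation. This bounds the
jump count at height `1` by `∑ ‖f_i‖² + ∑ ‖g_j‖²`; rescaling `f` and `g` turns the sum into
`λ⁻¹` times the product of the square roots.
-/

open MeasureTheory ENNReal
open scoped FourierTransform NNReal

noncomputable section

/-- A jump collection: a sequence of measurable integer-valued functions on `ℝ`,
nondecreasing in the index. -/
def IsJumpCollection (Nk : ℕ → ℝ → ℤ) : Prop :=
  (∀ k, Measurable (Nk k)) ∧ ∀ (k : ℕ) (x : ℝ), Nk k x ≤ Nk (k + 1) x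

/-- The dilate `φ_i(x) = 2^i φ(2^i x)` of a Schwartz function `φ`. -/
def dilate (φ : SchwartzMap ℝ ℂ) (i : ℤ) : ℝ → ℂ :=
  fun x => ((2 : ℝ) ^ i : ℝ) • φ (((2 : ℝ) ^ i) * x)

/-- Convolution `(φ_i * h)(x) = ∫ φ_i(x - y) h(y) dy`. -/
def conv (φi : ℝ → ℂ) (h : ℝ → ℂ) : ℝ → ℂ :=
  fun x => ∫ y : ℝ, φi (x - y) * h y

section Paraproduct

variable {R : Type*} [Ring R]

/-- The discrete paraproduct `∑_{m ≤ j < n} (A_j - A_m) (B_{j+1} - B_j)`. -/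
def paraproduct (A B : ℕ → R) (m n : ℕ) : R :=
  ∑ j ∈ Finset.Ico m n, (A j - A m) * (B (j + 1) - B j)

@[simp]
lemma paraproduct_self (A B : ℕ → R) (m : ℕ) : paraproduct A B m m = 0 := by
  simp [paraproduct]

lemma paraproduct_succ (A B : ℕ → R) {m n : ℕ} (hmn : m ≤ n) :
    paraproduct A B m (n + 1) =
      paraproduct A B m n + (A n - A m) * (B (n + 1) - B n) :=
  Finset.sum_Ico_succ_top hmn _

lemma paraproduct_sub_paraproduct (A B M M' : ℕ → R) {m n : ℕ} (hmn : m ≤ n) :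
    paraproduct A B m n - paraproduct M M' m n =
      ∑ j ∈ Finset.Ico m n, (A j - M j) * (B (j + 1) - B j)
        - (A m - M m) * (B n - B m) + (M n - M m) * (B n - M' n)
        - ∑ j ∈ Finset.Ico m n, (M (j + 1) - M j) * (B (j + 1) - M' (j + 1)) := by
  induction n, hmn using Nat.le_induction with
  | base => simp
  | succ n hmn ih =>
    rw [paraproduct_succ A B hmn, paraproduct_succ M M' hmn, add_sub_add_comm, ih,
      Finset.sum_Ico_succ_top hmn, Finset.sum_Ico_succ_top hmn]
    noncomm_ring

end Paraproduct

section GreedySelection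

variable {R : Type*} [NormedRing R]

/-- The state of the greedy selection of jumps of a paraproduct `paraproduct M M'`: the increments
of `M` and of `M'` and the value of the paraproduct, all counted from the last reset. -/
@[ext]
structure ParaState (R : Type*) where
  left : R
  right : R
  area : R

namespace ParaState

instance : Zero (ParaState R) := ⟨⟨0, 0, 0⟩⟩

@[simp] lemma zero_left : (0 : ParaState R).left = 0 := rfl
@[simp] lemma zero_right : (0 : ParaState R).right = 0 := rfl
@[simp] lemma zero_area : (0 : ParaState R).area = 0 := rfl

/-- The squared Euclidean size of a state, which triggers a reset once it exceeds `1 / 100`. -/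
def energy (s : ParaState R) : ℝ≥0 := ‖s.left‖₊ ^ 2 + ‖s.right‖₊ ^ 2 + ‖s.area‖₊ ^ 2

@[simp] lemma energy_zero : (0 : ParaState R).energy = 0 := by simp [energy]

/-- The state after the increments `d` of `M` and `d'` of `M'`, without a reset. -/
def advance (s : ParaState R) (d d' : R) : ParaState R :=
  ⟨s.left + d, s.right + d', s.area + s.left * d'⟩

/-- The state after the increments `d` of `M` and `d'` of `M'`, reset to `0` if it got large. -/
def step (s : ParaState R) (d d' : R) : ParaState R :=
  if 1 / 100 < (s.advance d d').energy then 0 else s.advance d d'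

lemma energy_step_le (s : ParaState R) (d d' : R) : (s.step d d').energy ≤ 1 / 100 := by
  unfold step
  split_ifs with h
  · simp
  · exact not_lt.1 h

lemma norm_le_of_energy_le {s : ParaState R} (hs : s.energy ≤ 1 / 100) :
    ‖s.left‖ ≤ 1 / 10 ∧ ‖s.right‖ ≤ 1 / 10 ∧ ‖s.area‖ ≤ 1 / 10 := by
  have h : ‖s.left‖ ^ 2 + ‖s.right‖ ^ 2 + ‖s.area‖ ^ 2 ≤ 1 / 100 := by exact_mod_cast hs
  refine ⟨?_, ?_, ?_⟩ <;> refine le_of_sq_le_sq ?_ (by norm_num) <;>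
    nlinarith [sq_nonneg ‖s.left‖, sq_nonneg ‖s.right‖, sq_nonneg ‖s.area‖]

end ParaState

/-- The states of the greedy selection along `M` and `M'`. -/
def greedyState (M M' : ℕ → R) : ℕ → ParaState R
  | 0 => 0
  | n + 1 => (greedyState M M' n).step (M (n + 1) - M n) (M' (n + 1) - M' n)

/-- The greedy selection along `M` and `M'` is reset between the times `n` and `n + 1`. -/
def Resets (M M' : ℕ → R) (n : ℕ) : Prop :=
  1 / 100 < ((greedyState M M' n).advance (M (n + 1) - M n) (M' (n + 1) - M' n)).energy

open Classical in
/-- The indicator function of `Resets M M'`, which counts the resets when it is summed. -/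
def resetIndicator (M M' : ℕ → R) (n : ℕ) : ℝ≥0 := if Resets M M' n then 1 else 0

lemma energy_greedyState_le (M M' : ℕ → R) : ∀ n, (greedyState M M' n).energy ≤ 1 / 100
  | 0 => by simp [greedyState]
  | _ + 1 => ParaState.energy_step_le _ _ _

lemma greedyState_succ_of_not_resets {M M' : ℕ → R} {n : ℕ} (h : ¬Resets M M' n) :
    greedyState M M' (n + 1) =
      (greedyState M M' n).advance (M (n + 1) - M n) (M' (n + 1) - M' n) :=
  if_neg h

lemma greedyState_of_no_resets {M M' : ℕ → R} {m n : ℕ} (hmn : m ≤ n)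
    (h : ∀ j ∈ Finset.Ico m n, ¬Resets M M' j) :
    greedyState M M' n =
      ⟨(greedyState M M' m).left + (M n - M m), (greedyState M M' m).right + (M' n - M' m),
        (greedyState M M' m).area + (greedyState M M' m).left * (M' n - M' m)
          + paraproduct M M' m n⟩ := by
  induction n, hmn using Nat.le_induction with
  | base => simp
  | succ n hmn ih =>
    rw [greedyState_succ_of_not_resets (h n (by simp [hmn])),
      ih fun j hj => h j (Finset.Ico_subset_Ico_right n.le_succ hj), paraproduct_succ M M' hmn]
    ext <;> simp only [ParaState.advance] <;> noncomm_ring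

lemma norm_le_of_no_resets {M M' : ℕ → R} {m n : ℕ} (hmn : m ≤ n)
    (h : ∀ j ∈ Finset.Ico m n, ¬Resets M M' j) :
    ‖M n - M m‖ ≤ 1 / 5 ∧ ‖M' n - M' m‖ ≤ 1 / 5 ∧ ‖paraproduct M M' m n‖ ≤ 22 / 100 := by
  obtain ⟨left_m, right_m, area_m⟩ :=
    ParaState.norm_le_of_energy_le (energy_greedyState_le M M' m)
  obtain ⟨left_n, right_n, area_n⟩ :=
    ParaState.norm_le_of_energy_le (energy_greedyState_le M M' n)
  have hs := greedyState_of_no_resets hmn h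
  set s := greedyState M M' m
  rw [hs] at left_n right_n area_n
  have hM : ‖M n - M m‖ ≤ 1 / 5 :=
    calc ‖M n - M m‖ = ‖s.left + (M n - M m) - s.left‖ := by rw [add_sub_cancel_left]
      _ ≤ 1 / 5 := (norm_sub_le _ _).trans (by linarith)
  have hM' : ‖M' n - M' m‖ ≤ 1 / 5 :=
    calc ‖M' n - M' m‖ = ‖s.right + (M' n - M' m) - s.right‖ := by rw [add_sub_cancel_left]
      _ ≤ 1 / 5 := (norm_sub_le _ _).trans (by linarith)
  have hprod : ‖s.left * (M' n - M' m)‖ ≤ 1 / 10 * (1 / 5) :=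
    (norm_mul_le _ _).trans (mul_le_mul left_m hM' (norm_nonneg _) (by norm_num))
  refine ⟨hM, hM', ?_⟩
  calc ‖paraproduct M M' m n‖
      = ‖s.area + s.left * (M' n - M' m) + paraproduct M M' m n
          - (s.area + s.left * (M' n - M' m))‖ := by rw [add_sub_cancel_left]
    _ ≤ 1 / 10 + (‖s.area‖ + ‖s.left * (M' n - M' m)‖) :=
      (norm_sub_le _ _).trans (add_le_add area_n (norm_add_le _ _))
    _ ≤ 22 / 100 := by linarith

/-- The local error made at time `j` when `A` and `B` are replaced by `M` and `M'`. -/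
def jumpDefect (A B M M' : ℕ → R) (j : ℕ) : ℝ≥0 :=
  ‖A j - M j‖₊ ^ 2 + ‖B j - M' j‖₊ ^ 2 + ‖B (j + 1) - M' (j + 1)‖₊ ^ 2
    + ‖B (j + 1) - B j‖₊ ^ 2 + ‖M (j + 1) - M j‖₊ ^ 2

/-- The cost charged at time `j`: every jump of `paraproduct A B` of size more than `1` is paid for
by the costs charged during it. -/
def jumpCost (A B M M' : ℕ → R) (j : ℕ) : ℝ≥0 :=
  resetIndicator M M' j + 10 * jumpDefect A B M M' j

lemma norm_paraproduct_sub_paraproduct_le (A B M M' : ℕ → R) {m n : ℕ} (hmn : m ≤ n) :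
    ‖paraproduct A B m n - paraproduct M M' m n‖ ≤
      ‖A m - M m‖ * ‖B n - B m‖ + ‖M n - M m‖ * ‖B n - M' n‖
        + (∑ j ∈ Finset.Ico m n, (jumpDefect A B M M' j : ℝ)) / 2 := by
  have hsums : ‖∑ j ∈ Finset.Ico m n, (A j - M j) * (B (j + 1) - B j)‖
      + ‖∑ j ∈ Finset.Ico m n, (M (j + 1) - M j) * (B (j + 1) - M' (j + 1))‖
      ≤ (∑ j ∈ Finset.Ico m n, (jumpDefect A B M M' j : ℝ)) / 2 := by
    refine (add_le_add (norm_sum_le _ _) (norm_sum_le _ _)).trans ?_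
    rw [← Finset.sum_add_distrib, Finset.sum_div]
    refine Finset.sum_le_sum fun j _ => (add_le_add (norm_mul_le _ _) (norm_mul_le _ _)).trans ?_
    simp only [jumpDefect, NNReal.coe_add, NNReal.coe_pow, coe_nnnorm]
    linarith [two_mul_le_add_sq ‖A j - M j‖ ‖B (j + 1) - B j‖, sq_nonneg ‖B j - M' j‖,
      two_mul_le_add_sq ‖M (j + 1) - M j‖ ‖B (j + 1) - M' (j + 1)‖]
  rw [paraproduct_sub_paraproduct A B M M' hmn]
  have hleft := norm_mul_le (A m - M m) (B n - B m)
  have hright := norm_mul_le (M n - M m) (B n - M' n)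
  refine (norm_sub_le _ _).trans <| (add_le_add_left ((norm_add_le _ _).trans
    (add_le_add_left (norm_sub_le _ _) _)) _).trans ?_
  linarith

lemma endpoint_errors_le_sum_jumpDefect (A B M M' : ℕ → R) {m n : ℕ} (hmn : m < n) :
    ‖A m - M m‖ ^ 2 ≤ ∑ j ∈ Finset.Ico m n, (jumpDefect A B M M' j : ℝ) ∧
    ‖B m - M' m‖ ^ 2 ≤ ∑ j ∈ Finset.Ico m n, (jumpDefect A B M M' j : ℝ) ∧
    ‖B n - M' n‖ ^ 2 ≤ ∑ j ∈ Finset.Ico m n, (jumpDefect A B M M' j : ℝ) := by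
  obtain ⟨n, rfl⟩ : ∃ l, n = l + 1 := ⟨n - 1, by omega⟩
  have hle (j : ℕ) (hj : j ∈ Finset.Ico m (n + 1)) :
      (jumpDefect A B M M' j : ℝ) ≤ ∑ j ∈ Finset.Ico m (n + 1), (jumpDefect A B M M' j : ℝ) :=
    Finset.single_le_sum (f := fun j => (jumpDefect A B M M' j : ℝ)) (fun _ _ => by positivity) hj
  have hm := hle m (Finset.left_mem_Ico.2 hmn)
  have hn := hle n (by simpa using Nat.lt_succ_iff.1 hmn)
  refine ⟨le_trans ?_ hm, le_trans ?_ hm, le_trans ?_ hn⟩ <;>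
  · simp only [jumpDefect, NNReal.coe_add, NNReal.coe_pow, coe_nnnorm]
    linarith [sq_nonneg ‖A m - M m‖, sq_nonneg ‖A n - M n‖, sq_nonneg ‖B m - M' m‖,
      sq_nonneg ‖B n - M' n‖, sq_nonneg ‖B (m + 1) - M' (m + 1)‖, sq_nonneg ‖B (m + 1) - B m‖,
      sq_nonneg ‖B (n + 1) - M' (n + 1)‖, sq_nonneg ‖B (n + 1) - B n‖,
      sq_nonneg ‖M (m + 1) - M m‖, sq_nonneg ‖M (n + 1) - M n‖]

lemma norm_paraproduct_le_one_of_no_resets {A B M M' : ℕ → R} {m n : ℕ} (hmn : m < n)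
    (hreset : ∀ j ∈ Finset.Ico m n, ¬Resets M M' j)
    (hdefect : ∑ j ∈ Finset.Ico m n, (jumpDefect A B M M' j : ℝ) ≤ 1 / 10) :
    ‖paraproduct A B m n‖ ≤ 1 := by
  obtain ⟨hM, hM', hpara⟩ := norm_le_of_no_resets hmn.le hreset
  obtain ⟨hAm, hBm, hBn⟩ := endpoint_errors_le_sum_jumpDefect A B M M' hmn
  have sqrt_le {a : ℝ} (ha : a ^ 2 ≤ ∑ j ∈ Finset.Ico m n, (jumpDefect A B M M' j : ℝ)) :
      a ≤ 32 / 100 := le_of_sq_le_sq (by linarith) (by norm_num)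
  have hB : ‖B n - B m‖ ≤ 84 / 100 :=
    calc ‖B n - B m‖ = ‖(M' n - M' m) + (B n - M' n) - (B m - M' m)‖ := by congr 1; abel
      _ ≤ ‖M' n - M' m‖ + ‖B n - M' n‖ + ‖B m - M' m‖ :=
        (norm_sub_le _ _).trans (add_le_add_left (norm_add_le _ _) _)
      _ ≤ 84 / 100 := by linarith [sqrt_le hBm, sqrt_le hBn]
  have hdiff := norm_paraproduct_sub_paraproduct_le A B M M' hmn.le
  have hleft : ‖A m - M m‖ * ‖B n - B m‖ ≤ 32 / 100 * (84 / 100) :=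
    mul_le_mul (sqrt_le hAm) hB (norm_nonneg _) (by norm_num)
  have hright : ‖M n - M m‖ * ‖B n - M' n‖ ≤ 1 / 5 * (32 / 100) :=
    mul_le_mul hM (sqrt_le hBn) (norm_nonneg _) (by norm_num)
  linarith [norm_le_norm_sub_add (paraproduct A B m n) (paraproduct M M' m n)]

lemma one_le_sum_jumpCost {A B : ℕ → R} (M M' : ℕ → R) {m n : ℕ} (hmn : m ≤ n)
    (h : 1 < ‖paraproduct A B m n‖) : 1 ≤ ∑ j ∈ Finset.Ico m n, jumpCost A B M M' j := by
  have hlt : m < n := hmn.lt_of_ne <| by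
    rintro rfl
    norm_num at h
  by_cases hreset : ∃ j ∈ Finset.Ico m n, Resets M M' j
  · obtain ⟨j, hj, hjr⟩ := hreset
    exact (by simp [jumpCost, resetIndicator, hjr] : 1 ≤ jumpCost A B M M' j).trans
      (Finset.single_le_sum (fun _ _ => zero_le) hj)
  · push Not at hreset
    have hdefect : (1 / 10 : ℝ) < ∑ j ∈ Finset.Ico m n, (jumpDefect A B M M' j : ℝ) := by
      contrapose! h
      exact norm_paraproduct_le_one_of_no_resets hlt hreset h
    have hdefect' : (1 / 10 : ℝ≥0) < ∑ j ∈ Finset.Ico m n, jumpDefect A B M M' j := by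
      exact_mod_cast hdefect
    calc (1 : ℝ≥0) = 10 * (1 / 10) := by norm_num
      _ ≤ 10 * ∑ j ∈ Finset.Ico m n, jumpDefect A B M M' j := by gcongr
      _ ≤ ∑ j ∈ Finset.Ico m n, jumpCost A B M M' j := by
        rw [Finset.mul_sum]
        exact Finset.sum_le_sum fun _ _ => le_add_self

lemma card_le_sum_jumpCost {A B : ℕ → R} (M M' : ℕ → R) {T : ℕ} {n : ℕ → ℕ} (hn : Monotone n)
    {S : Finset ℕ} (hS : ∀ k ∈ S, n (k + 1) ≤ T ∧ 1 < ‖paraproduct A B (n k) (n (k + 1))‖) :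
    (S.card : ℝ≥0) ≤ ∑ j ∈ Finset.range T, jumpCost A B M M' j := by
  have hdisj : (S : Set ℕ).PairwiseDisjoint fun k => Finset.Ico (n k) (n (k + 1)) :=
    fun k _ l _ hkl => by
      simpa [Function.onFun, ← Finset.disjoint_coe] using hn.pairwise_disjoint_on_Ico_succ hkl
  calc (S.card : ℝ≥0) = ∑ _k ∈ S, 1 := by simp
    _ ≤ ∑ k ∈ S, ∑ j ∈ Finset.Ico (n k) (n (k + 1)), jumpCost A B M M' j :=
      Finset.sum_le_sum fun k hk => one_le_sum_jumpCost M M' (hn k.le_succ) (hS k hk).2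
    _ = ∑ j ∈ S.biUnion fun k => Finset.Ico (n k) (n (k + 1)), jumpCost A B M M' j :=
      (Finset.sum_biUnion hdisj).symm
    _ ≤ ∑ j ∈ Finset.range T, jumpCost A B M M' j := by
      refine Finset.sum_le_sum_of_subset fun j hj => ?_
      obtain ⟨k, hk, hjk⟩ := Finset.mem_biUnion.1 hj
      exact Finset.mem_range.2 ((Finset.mem_Ico.1 hjk).2.trans_le (hS k hk).1)

end GreedySelection

section Dyadic

/-- The number `k` of the dyadic interval `[k 2^{-n}, (k + 1) 2^{-n})` that contains `x`. -/
def dyadicIndex (n : ℤ) (x : ℝ) : ℤ := ⌊(2 : ℝ) ^ n * x⌋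

/-- The translation of `x` into the other half of the dyadic interval of length `2^{1-n}` that
contains `x`. -/
def dyadicSibling (n : ℤ) (x : ℝ) : ℝ :=
  if Even (dyadicIndex n x) then x + (2 : ℝ) ^ (-n) else x - (2 : ℝ) ^ (-n)

lemma measurable_dyadicIndex (n : ℤ) : Measurable (dyadicIndex n) :=
  Int.measurable_floor.comp (measurable_const_mul _)

lemma dyadicIndex_add (n : ℤ) (x : ℝ) :
    dyadicIndex n (x + (2 : ℝ) ^ (-n)) = dyadicIndex n x + 1 := by
  simp [dyadicIndex, mul_add, zpow_ne_zero]

lemma dyadicIndex_sub (n : ℤ) (x : ℝ) :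
    dyadicIndex n (x - (2 : ℝ) ^ (-n)) = dyadicIndex n x - 1 := by
  simp [dyadicIndex, mul_sub, zpow_ne_zero]

lemma dyadicIndex_intCast_mul (n k : ℤ) : dyadicIndex n (k * (2 : ℝ) ^ (-n)) = k := by
  simp [dyadicIndex, mul_left_comm, zpow_ne_zero]

lemma dyadicIndex_eq_ediv_two (n : ℤ) (x : ℝ) :
    dyadicIndex n x = dyadicIndex (n + 1) x / 2 := by
  have hdiv : (2 : ℝ) ^ n * x = (2 : ℝ) ^ (n + 1) * x / (2 : ℕ) := by
    rw [zpow_add_one₀ two_ne_zero, Nat.cast_two]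
    ring
  rw [dyadicIndex, dyadicIndex, hdiv, Int.floor_div_natCast, Nat.cast_two]

lemma dyadicIndex_sibling_succ (n : ℤ) (x : ℝ) :
    dyadicIndex n (dyadicSibling (n + 1) x) = dyadicIndex n x := by
  rw [dyadicIndex_eq_ediv_two n, dyadicIndex_eq_ediv_two n x, dyadicSibling]
  split_ifs with h
  · rw [dyadicIndex_add]
    grind
  · rw [dyadicIndex_sub]
    grind

lemma lintegral_comp_dyadicSibling (n : ℤ) {h : ℝ → ℝ≥0∞} (hh : Measurable h) :
    ∫⁻ x, h (dyadicSibling n x) = ∫⁻ x, h x := by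
  set E : Set ℝ := {x | Even (dyadicIndex n x)}
  have hE : MeasurableSet E := measurable_dyadicIndex n (.of_discrete (s := {k : ℤ | Even k}))
  have hsplit (x : ℝ) : h (dyadicSibling n x) =
      Eᶜ.indicator h (x + (2 : ℝ) ^ (-n)) + E.indicator h (x - (2 : ℝ) ^ (-n)) := by
    have hadd : x + (2 : ℝ) ^ (-n) ∈ Eᶜ ↔ Even (dyadicIndex n x) := by
      simp only [E, Set.mem_compl_iff, Set.mem_ofPred_eq, dyadicIndex_add, Int.even_add_one,
        not_not]
    have hsub : x - (2 : ℝ) ^ (-n) ∈ E ↔ ¬Even (dyadicIndex n x) := by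
      simp only [E, Set.mem_ofPred_eq, dyadicIndex_sub, Int.even_sub_one]
    by_cases hx : Even (dyadicIndex n x) <;>
      simp only [dyadicSibling, Set.indicator, hadd, hsub, hx, if_true, if_false, not_true_eq_false,
        not_false_eq_true, add_zero, zero_add]
  calc ∫⁻ x, h (dyadicSibling n x)
      = ∫⁻ x, Eᶜ.indicator h (x + (2 : ℝ) ^ (-n)) + E.indicator h (x - (2 : ℝ) ^ (-n)) := by
        simp only [hsplit]
    _ = (∫⁻ x, Eᶜ.indicator h x) + ∫⁻ x, E.indicator h x := by
        have hmeas : Measurable fun x => Eᶜ.indicator h (x + (2 : ℝ) ^ (-n)) :=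
          (hh.indicator hE.compl).comp (measurable_add_const _)
        rw [lintegral_add_left hmeas, lintegral_add_right_eq_self (Eᶜ.indicator h),
          lintegral_sub_right_eq_self (E.indicator h)]
    _ = ∫⁻ x, h x := by
        rw [lintegral_indicator hE.compl, lintegral_indicator hE, add_comm,
          lintegral_add_compl _ hE]

/-- `h` is constant on every dyadic interval of length `2^{-n}`. -/
def IsDyadicStep {β : Type*} (n : ℤ) (h : ℝ → β) : Prop :=
  ∀ x y, dyadicIndex n x = dyadicIndex n y → h x = h y

namespace IsDyadicStep

variable {β : Type*} {n : ℤ} {h : ℝ → β}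

lemma measurable [MeasurableSpace β] (hh : IsDyadicStep n h) : Measurable h := by
  have hcomp : h = (fun k : ℤ => h (k * (2 : ℝ) ^ (-n))) ∘ dyadicIndex n :=
    funext fun x => hh _ _ (dyadicIndex_intCast_mul n _).symm
  rw [hcomp]
  exact Measurable.of_discrete.comp (measurable_dyadicIndex n)

lemma succ (hh : IsDyadicStep n h) : IsDyadicStep (n + 1) h := fun x y hxy =>
  hh x y (by rw [dyadicIndex_eq_ediv_two n x, dyadicIndex_eq_ediv_two n y, hxy])

lemma comp_sibling (hh : IsDyadicStep n h) (x : ℝ) : h (dyadicSibling (n + 1) x) = h x :=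
  hh _ _ (dyadicIndex_sibling_succ n x)

end IsDyadicStep

/-- `M` is a martingale for the dyadic filtration that starts with the intervals of length
`2^{-a}`. The martingale property is encoded by the antisymmetry of the increments under exchanging
the two halves of a dyadic interval, so that no integrability is involved. -/
structure IsDyadicMartingale {E : Type*} [AddGroup E] (a : ℤ) (M : ℕ → ℝ → E) : Prop where
  isDyadicStep (t : ℕ) : IsDyadicStep (a + t) (M t)
  sibling (t : ℕ) (x : ℝ) :
    M (t + 1) (dyadicSibling (a + t + 1) x) - M t x = -(M (t + 1) x - M t x)

namespace IsDyadicMartingale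

variable {E : Type*} [AddGroup E] {a : ℤ} {M : ℕ → ℝ → E}

lemma isDyadicStep_succ (hM : IsDyadicMartingale a M) (t : ℕ) :
    IsDyadicStep (a + t + 1) (M (t + 1)) := by
  simpa [add_assoc] using hM.isDyadicStep (t + 1)

lemma isDyadicStep_increment (hM : IsDyadicMartingale a M) (t : ℕ) :
    IsDyadicStep (a + t + 1) fun x => M (t + 1) x - M t x := fun x y hxy => by
  simp only [hM.isDyadicStep_succ t x y hxy, (hM.isDyadicStep t).succ x y hxy]

lemma increment_sibling (hM : IsDyadicMartingale a M) (t : ℕ) (x : ℝ) :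
    M (t + 1) (dyadicSibling (a + t + 1) x) - M t (dyadicSibling (a + t + 1) x) =
      -(M (t + 1) x - M t x) := by
  rw [(hM.isDyadicStep t).comp_sibling, hM.sibling]

end IsDyadicMartingale

end Dyadic

section Energy

lemma isDyadicStep_greedyState {R : Type*} [NormedRing R] {a : ℤ} {M M' : ℕ → ℝ → R}
    (hM : IsDyadicMartingale a M) (hM' : IsDyadicMartingale a M') (t : ℕ) :
    IsDyadicStep (a + t) fun x => greedyState (M · x) (M' · x) t := by
  induction t with
  | zero => exact fun x y _ => rfl
  | succ t ih =>
    rw [Nat.cast_succ, ← add_assoc]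
    intro x y hxy
    have hstate := ih.succ x y hxy
    have hd := hM.isDyadicStep_increment t x y hxy
    have hd' := hM'.isDyadicStep_increment t x y hxy
    simp only at hstate hd hd'
    simp only [greedyState, hstate, hd, hd']

lemma isDyadicStep_resets {R : Type*} [NormedRing R] {a : ℤ} {M M' : ℕ → ℝ → R}
    (hM : IsDyadicMartingale a M) (hM' : IsDyadicMartingale a M') (t : ℕ) :
    IsDyadicStep (a + t + 1) fun x => Resets (M · x) (M' · x) t := fun x y hxy => by
  have hstate := (isDyadicStep_greedyState hM hM' t).succ x y hxy
  have hd := hM.isDyadicStep_increment t x y hxy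
  have hd' := hM'.isDyadicStep_increment t x y hxy
  simp only at hstate hd hd'
  simp only [Resets, hstate, hd, hd']

lemma isDyadicStep_resetIndicator {R : Type*} [NormedRing R] {a : ℤ} {M M' : ℕ → ℝ → R}
    (hM : IsDyadicMartingale a M) (hM' : IsDyadicMartingale a M') (t : ℕ) :
    IsDyadicStep (a + t + 1) fun x => resetIndicator (M · x) (M' · x) t := fun x y hxy => by
  classical exact if_congr (Iff.of_eq (isDyadicStep_resets hM hM' t x y hxy)) rfl rfl

lemma resetIndicator_add_energy_le {R : Type*} [NormedRing R] (M M' : ℕ → R) (n : ℕ) :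
    1 / 100 * resetIndicator M M' n + (greedyState M M' (n + 1)).energy ≤
      ((greedyState M M' n).advance (M (n + 1) - M n) (M' (n + 1) - M' n)).energy := by
  by_cases h : Resets M M' n
  · have hstate : greedyState M M' (n + 1) = 0 := if_pos h
    simpa [resetIndicator, h, hstate] using le_of_lt h
  · simp [resetIndicator, h, greedyState_succ_of_not_resets h]

variable {𝕜 : Type*} [RCLike 𝕜]

lemma nnnorm_add_sq_add_nnnorm_sub_sq (z w : 𝕜) :
    ‖z + w‖₊ ^ 2 + ‖z - w‖₊ ^ 2 = 2 * (‖z‖₊ ^ 2 + ‖w‖₊ ^ 2) := by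
  refine NNReal.eq ?_
  push_cast
  exact parallelogram_law_with_norm 𝕜 z w

lemma ParaState.energy_advance_add_energy_advance_neg_le {s : ParaState 𝕜} (hs : ‖s.left‖₊ ≤ 1)
    (d d' : 𝕜) :
    (s.advance d d').energy + (s.advance (-d) (-d')).energy ≤
      2 * (s.energy + (‖d‖₊ ^ 2 + 2 * ‖d'‖₊ ^ 2)) := by
  have hprod : ‖s.left * d'‖₊ ^ 2 ≤ ‖d'‖₊ ^ 2 := by
    rw [nnnorm_mul]
    exact pow_le_pow_left' (mul_le_of_le_one_left' hs) 2
  simp only [energy, advance, mul_neg, ← sub_eq_add_neg]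
  calc _ = (‖s.left + d‖₊ ^ 2 + ‖s.left - d‖₊ ^ 2) + (‖s.right + d'‖₊ ^ 2 + ‖s.right - d'‖₊ ^ 2)
        + (‖s.area + s.left * d'‖₊ ^ 2 + ‖s.area - s.left * d'‖₊ ^ 2) := by ring
    _ = 2 * (‖s.left‖₊ ^ 2 + ‖d‖₊ ^ 2) + 2 * (‖s.right‖₊ ^ 2 + ‖d'‖₊ ^ 2)
        + 2 * (‖s.area‖₊ ^ 2 + ‖s.left * d'‖₊ ^ 2) := by
      simp only [nnnorm_add_sq_add_nnnorm_sub_sq]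
    _ ≤ 2 * (‖s.left‖₊ ^ 2 + ‖d‖₊ ^ 2) + 2 * (‖s.right‖₊ ^ 2 + ‖d'‖₊ ^ 2)
        + 2 * (‖s.area‖₊ ^ 2 + ‖d'‖₊ ^ 2) := by gcongr
    _ = _ := by ring

-- The cross terms in the energy are odd under `dyadicSibling`, hence integrate to zero.
lemma lintegral_energy_advance_le {n : ℤ} {s : ℝ → ParaState 𝕜} {d d' : ℝ → 𝕜}
    (hs : IsDyadicStep n s) (hs_le : ∀ x, ‖(s x).left‖₊ ≤ 1)
    (hd : IsDyadicStep (n + 1) d) (hd' : IsDyadicStep (n + 1) d')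
    (hd_sib : ∀ x, d (dyadicSibling (n + 1) x) = -d x)
    (hd'_sib : ∀ x, d' (dyadicSibling (n + 1) x) = -d' x) :
    ∫⁻ x, ((s x).advance (d x) (d' x)).energy ≤
      (∫⁻ x, (s x).energy) + ∫⁻ x, (‖d x‖ₑ ^ 2 + 2 * ‖d' x‖ₑ ^ 2) := by
  have hadvance : Measurable fun x => (((s x).advance (d x) (d' x)).energy : ℝ≥0∞) :=
    IsDyadicStep.measurable (n := n + 1) fun x y hxy => by
      rw [hs.succ x y hxy, hd x y hxy, hd' x y hxy]
  have henergy : Measurable fun x => ((s x).energy : ℝ≥0∞) :=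
    IsDyadicStep.measurable (n := n) fun x y hxy => by rw [hs x y hxy]
  rw [← ENNReal.mul_le_mul_iff_right two_ne_zero ofNat_ne_top, ← lintegral_add_left henergy]
  calc 2 * ∫⁻ x, ((s x).advance (d x) (d' x)).energy
      = ∫⁻ x, ((s x).advance (d x) (d' x)).energy
          + ((s x).advance (-d x) (-d' x)).energy := by
        rw [lintegral_add_left hadvance, two_mul]
        congr 1
        rw [← lintegral_comp_dyadicSibling (n + 1) hadvance]
        simp only [hs.comp_sibling, hd_sib, hd'_sib]
    _ ≤ ∫⁻ x, 2 * ((s x).energy + (‖d x‖ₑ ^ 2 + 2 * ‖d' x‖ₑ ^ 2)) :=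
        lintegral_mono fun x => by
          have h := ParaState.energy_advance_add_energy_advance_neg_le (hs_le x) (d x) (d' x)
          simp only [enorm_eq_nnnorm]
          exact_mod_cast h
    _ = 2 * ∫⁻ x, ((s x).energy + (‖d x‖ₑ ^ 2 + 2 * ‖d' x‖ₑ ^ 2)) :=
        lintegral_const_mul' _ _ ofNat_ne_top

variable {a : ℤ} {M M' : ℕ → ℝ → 𝕜}

lemma lintegral_reset_add_energy_le (hM : IsDyadicMartingale a M) (hM' : IsDyadicMartingale a M')
    (t : ℕ) :
    1 / 100 * (∫⁻ x, resetIndicator (M · x) (M' · x) t)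
        + ∫⁻ x, (greedyState (M · x) (M' · x) (t + 1)).energy ≤
      (∫⁻ x, (greedyState (M · x) (M' · x) t).energy)
        + ∫⁻ x, (‖M (t + 1) x - M t x‖ₑ ^ 2 + 2 * ‖M' (t + 1) x - M' t x‖ₑ ^ 2) := by
  have hleft (x : ℝ) : ‖(greedyState (M · x) (M' · x) t).left‖₊ ≤ 1 := by
    have h := (ParaState.norm_le_of_energy_le (energy_greedyState_le (M · x) (M' · x) t)).1
    exact NNReal.coe_le_coe.1 (h.trans (by norm_num))
  refine le_trans ?_ <| lintegral_energy_advance_le (isDyadicStep_greedyState hM hM' t) hleft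
    (hM.isDyadicStep_increment t) (hM'.isDyadicStep_increment t)
    (hM.increment_sibling t) (hM'.increment_sibling t)
  have hreset := (isDyadicStep_resetIndicator hM hM' t).measurable.coe_nnreal_ennreal
  rw [← lintegral_const_mul _ hreset, ← lintegral_add_left (hreset.const_mul _)]
  refine lintegral_mono fun x => ?_
  have h := ENNReal.coe_le_coe.2 (resetIndicator_add_energy_le (M · x) (M' · x) t)
  simpa [ENNReal.coe_div] using h

/-- The integrated square variation `∑_{t < T} ‖M_{t+1} - M_t‖_{L²}²` of a process. -/
def squareVariation {E : Type*} [NormedAddCommGroup E] (M : ℕ → ℝ → E) (T : ℕ) : ℝ≥0∞ :=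
  ∑ t ∈ Finset.range T, ∫⁻ x, ‖M (t + 1) x - M t x‖ₑ ^ 2

/-- The square distance `∑_{t ≤ T} ‖A_t - M_t‖_{L²}²` between two processes. -/
def approxError {E : Type*} [NormedAddCommGroup E] (A M : ℕ → ℝ → E) (T : ℕ) : ℝ≥0∞ :=
  ∑ t ∈ Finset.range (T + 1), ∫⁻ x, ‖A t x - M t x‖ₑ ^ 2

lemma sum_lintegral_resetIndicator_le (hM : IsDyadicMartingale a M)
    (hM' : IsDyadicMartingale a M') (T : ℕ) :
    ∑ t ∈ Finset.range T, ∫⁻ x, resetIndicator (M · x) (M' · x) t ≤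
      100 * (squareVariation M T + 2 * squareVariation M' T) := by
  have htelescope (T : ℕ) :
      1 / 100 * (∑ t ∈ Finset.range T, ∫⁻ x, resetIndicator (M · x) (M' · x) t)
        + ∫⁻ x, (greedyState (M · x) (M' · x) T).energy ≤
      ∑ t ∈ Finset.range T,
        ∫⁻ x, (‖M (t + 1) x - M t x‖ₑ ^ 2 + 2 * ‖M' (t + 1) x - M' t x‖ₑ ^ 2) := by
    induction T with
    | zero => simp [greedyState]
    | succ T ih =>
      rw [Finset.sum_range_succ, Finset.sum_range_succ, mul_add, add_assoc]
      refine (add_le_add_right (lintegral_reset_add_energy_le hM hM' T) _).trans ?_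
      rw [← add_assoc]
      exact add_le_add_left ih _
  have hvariation : ∑ t ∈ Finset.range T,
      ∫⁻ x, (‖M (t + 1) x - M t x‖ₑ ^ 2 + 2 * ‖M' (t + 1) x - M' t x‖ₑ ^ 2) =
        squareVariation M T + 2 * squareVariation M' T := by
    rw [squareVariation, squareVariation, Finset.mul_sum, ← Finset.sum_add_distrib]
    refine Finset.sum_congr rfl fun t _ => ?_
    rw [lintegral_add_left ((hM.isDyadicStep_increment t).measurable.enorm.pow_const 2),
      lintegral_const_mul' _ _ ofNat_ne_top]
  have h := mul_le_mul_right (le_self_add.trans (hvariation ▸ htelescope T)) 100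
  rwa [← mul_assoc, one_div, ENNReal.mul_inv_cancel (by norm_num) ofNat_ne_top, one_mul] at h

end Energy

section JumpCost

section Variation

variable {E : Type*} [NormedAddCommGroup E]

lemma enorm_sub_sq_le_three_mul (a a' m m' : E) :
    ‖m' - m‖ₑ ^ 2 ≤ 3 * (‖a' - a‖ₑ ^ 2 + ‖a' - m'‖ₑ ^ 2 + ‖a - m‖ₑ ^ 2) := by
  have h : ‖m' - m‖ ≤ ‖a' - a‖ + ‖a' - m'‖ + ‖a - m‖ :=
    calc ‖m' - m‖ = ‖(a' - a) - (a' - m') + (a - m)‖ := by congr 1; abel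
      _ ≤ _ := (norm_add_le _ _).trans (add_le_add_left (norm_sub_le _ _) _)
  have hsq : ‖m' - m‖ ^ 2 ≤ 3 * (‖a' - a‖ ^ 2 + ‖a' - m'‖ ^ 2 + ‖a - m‖ ^ 2) := by
    refine (pow_le_pow_left₀ (norm_nonneg _) h 2).trans ?_
    nlinarith [sq_nonneg (‖a' - a‖ - ‖a' - m'‖), sq_nonneg (‖a' - a‖ - ‖a - m‖),
      sq_nonneg (‖a' - m'‖ - ‖a - m‖)]
  simp only [← coe_nnnorm] at hsq
  simp only [enorm_eq_nnnorm]
  exact_mod_cast hsq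

lemma aemeasurable_enorm_sub_sq {f g : ℝ → E} (hf : AEStronglyMeasurable f)
    (hg : AEStronglyMeasurable g) : AEMeasurable fun x => ‖f x - g x‖ₑ ^ 2 :=
  (hf.sub hg).enorm.pow_const 2

variable {A M : ℕ → ℝ → E}

lemma sum_lintegral_le_approxError (A M : ℕ → ℝ → E) (T : ℕ) :
    ∑ t ∈ Finset.range T, ∫⁻ x, ‖A t x - M t x‖ₑ ^ 2 ≤ approxError A M T :=
  Finset.sum_le_sum_of_subset (Finset.range_mono T.le_succ)

lemma sum_lintegral_succ_le_approxError (A M : ℕ → ℝ → E) (T : ℕ) :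
    ∑ t ∈ Finset.range T, ∫⁻ x, ‖A (t + 1) x - M (t + 1) x‖ₑ ^ 2 ≤ approxError A M T := by
  rw [approxError, Finset.sum_range_succ']
  exact le_self_add

lemma squareVariation_le (hA : ∀ t, AEStronglyMeasurable (A t))
    (hM : ∀ t, AEStronglyMeasurable (M t)) (T : ℕ) :
    squareVariation M T ≤ 3 * (squareVariation A T + 2 * approxError A M T) := by
  calc squareVariation M T
      ≤ ∑ t ∈ Finset.range T, ∫⁻ x, 3 * (‖A (t + 1) x - A t x‖ₑ ^ 2
          + ‖A (t + 1) x - M (t + 1) x‖ₑ ^ 2 + ‖A t x - M t x‖ₑ ^ 2) :=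
        Finset.sum_le_sum fun t _ => lintegral_mono fun x => enorm_sub_sq_le_three_mul _ _ _ _
    _ = 3 * (squareVariation A T
          + (∑ t ∈ Finset.range T, ∫⁻ x, ‖A (t + 1) x - M (t + 1) x‖ₑ ^ 2)
          + ∑ t ∈ Finset.range T, ∫⁻ x, ‖A t x - M t x‖ₑ ^ 2) := by
        rw [squareVariation, ← Finset.sum_add_distrib, ← Finset.sum_add_distrib, Finset.mul_sum]
        refine Finset.sum_congr rfl fun t _ => ?_
        rw [lintegral_const_mul' _ _ ofNat_ne_top,
          lintegral_add_right' _ (aemeasurable_enorm_sub_sq (hA t) (hM t)),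
          lintegral_add_right' _ (aemeasurable_enorm_sub_sq (hA (t + 1)) (hM (t + 1)))]
    _ ≤ 3 * (squareVariation A T + 2 * approxError A M T) := by
        rw [add_assoc, two_mul]
        gcongr
        exacts [sum_lintegral_succ_le_approxError A M T, sum_lintegral_le_approxError A M T]

end Variation

lemma aemeasurable_jumpDefect {R : Type*} [NormedRing R] {A B M M' : ℕ → ℝ → R}
    (hA : ∀ t, AEStronglyMeasurable (A t)) (hB : ∀ t, AEStronglyMeasurable (B t))
    (hM : ∀ t, AEStronglyMeasurable (M t)) (hM' : ∀ t, AEStronglyMeasurable (M' t)) (t : ℕ) :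
    AEMeasurable fun x => jumpDefect (A · x) (B · x) (M · x) (M' · x) t := by
  have hsq {f g : ℝ → R} (hf : AEStronglyMeasurable f) (hg : AEStronglyMeasurable g) :
      AEMeasurable fun x => ‖f x - g x‖₊ ^ 2 := (hf.sub hg).nnnorm.aemeasurable.pow_const 2
  exact ((((hsq (hA t) (hM t)).add (hsq (hB t) (hM' t))).add (hsq (hB (t + 1)) (hM' (t + 1)))).add
    (hsq (hB (t + 1)) (hB t))).add (hsq (hM (t + 1)) (hM t))

lemma sum_lintegral_jumpDefect_le {R : Type*} [NormedRing R] {A B M M' : ℕ → ℝ → R}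
    (hB : ∀ t, AEStronglyMeasurable (B t))
    (hM : ∀ t, AEStronglyMeasurable (M t)) (hM' : ∀ t, AEStronglyMeasurable (M' t)) (T : ℕ) :
    ∑ t ∈ Finset.range T, ∫⁻ x, jumpDefect (A · x) (B · x) (M · x) (M' · x) t ≤
      approxError A M T + 2 * approxError B M' T + squareVariation B T + squareVariation M T := by
  calc ∑ t ∈ Finset.range T, ∫⁻ x, jumpDefect (A · x) (B · x) (M · x) (M' · x) t
      = (∑ t ∈ Finset.range T, ∫⁻ x, ‖A t x - M t x‖ₑ ^ 2)
        + (∑ t ∈ Finset.range T, ∫⁻ x, ‖B t x - M' t x‖ₑ ^ 2)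
        + (∑ t ∈ Finset.range T, ∫⁻ x, ‖B (t + 1) x - M' (t + 1) x‖ₑ ^ 2)
        + squareVariation B T + squareVariation M T := by
        simp only [squareVariation, ← Finset.sum_add_distrib]
        refine Finset.sum_congr rfl fun t _ => ?_
        rw [← lintegral_add_right' _ (aemeasurable_enorm_sub_sq (hB t) (hM' t)),
          ← lintegral_add_right' _ (aemeasurable_enorm_sub_sq (hB (t + 1)) (hM' (t + 1))),
          ← lintegral_add_right' _ (aemeasurable_enorm_sub_sq (hB (t + 1)) (hB t)),
          ← lintegral_add_right' _ (aemeasurable_enorm_sub_sq (hM (t + 1)) (hM t))]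
        simp [jumpDefect, enorm_eq_nnnorm]
    _ ≤ _ := by
        rw [two_mul, ← add_assoc]
        gcongr
        exacts [sum_lintegral_le_approxError A M T, sum_lintegral_le_approxError B M' T,
          sum_lintegral_succ_le_approxError B M' T]

lemma aemeasurable_jumpCost {R : Type*} [NormedRing R] {a : ℤ} {A B M M' : ℕ → ℝ → R}
    (hA : ∀ t, AEStronglyMeasurable (A t)) (hB : ∀ t, AEStronglyMeasurable (B t))
    (hM_meas : ∀ t, AEStronglyMeasurable (M t)) (hM'_meas : ∀ t, AEStronglyMeasurable (M' t))
    (hM : IsDyadicMartingale a M) (hM' : IsDyadicMartingale a M') (t : ℕ) :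
    AEMeasurable fun x => jumpCost (A · x) (B · x) (M · x) (M' · x) t :=
  (isDyadicStep_resetIndicator hM hM' t).measurable.aemeasurable.add
    ((aemeasurable_jumpDefect hA hB hM_meas hM'_meas t).const_mul 10)

theorem lintegral_sum_jumpCost_le {𝕜 : Type*} [RCLike 𝕜] {a : ℤ} {A B M M' : ℕ → ℝ → 𝕜}
    (hA : ∀ t, AEStronglyMeasurable (A t)) (hB : ∀ t, AEStronglyMeasurable (B t))
    (hM : IsDyadicMartingale a M) (hM' : IsDyadicMartingale a M') (T : ℕ) :
    ∫⁻ x, ∑ t ∈ Finset.range T, (jumpCost (A · x) (B · x) (M · x) (M' · x) t : ℝ≥0∞) ≤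
      1220 * ((squareVariation A T + approxError A M T)
        + (squareVariation B T + approxError B M' T)) := by
  have hM_meas (t : ℕ) : AEStronglyMeasurable (M t) :=
    (hM.isDyadicStep t).measurable.aestronglyMeasurable
  have hM'_meas (t : ℕ) : AEStronglyMeasurable (M' t) :=
    (hM'.isDyadicStep t).measurable.aestronglyMeasurable
  have hreset (t : ℕ) := (isDyadicStep_resetIndicator hM hM' t).measurable
  calc ∫⁻ x, ∑ t ∈ Finset.range T, (jumpCost (A · x) (B · x) (M · x) (M' · x) t : ℝ≥0∞)
      = (∑ t ∈ Finset.range T, ∫⁻ x, resetIndicator (M · x) (M' · x) t)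
        + 10 * ∑ t ∈ Finset.range T, ∫⁻ x, jumpDefect (A · x) (B · x) (M · x) (M' · x) t := by
        rw [lintegral_finsetSum' _ fun t _ => ?_, Finset.mul_sum, ← Finset.sum_add_distrib]
        · refine Finset.sum_congr rfl fun t _ => ?_
          rw [← lintegral_const_mul' _ _ ofNat_ne_top,
            ← lintegral_add_left (hreset t).coe_nnreal_ennreal]
          simp [jumpCost]
        · exact (aemeasurable_jumpCost hA hB hM_meas hM'_meas hM hM' t).coe_nnreal_ennreal
    _ ≤ 100 * (squareVariation M T + 2 * squareVariation M' T)
        + 10 * (approxError A M T + 2 * approxError B M' T + squareVariation B T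
          + squareVariation M T) := by
        gcongr
        exacts [sum_lintegral_resetIndicator_le hM hM' T,
          sum_lintegral_jumpDefect_le hB hM_meas hM'_meas T]
    _ ≤ 100 * (3 * (squareVariation A T + 2 * approxError A M T)
          + 2 * (3 * (squareVariation B T + 2 * approxError B M' T)))
        + 10 * (approxError A M T + 2 * approxError B M' T + squareVariation B T
          + 3 * (squareVariation A T + 2 * approxError A M T)) := by
        gcongr
        exacts [squareVariation_le hA hM_meas T, squareVariation_le hB hM'_meas T,
          squareVariation_le hA hM_meas T]
    _ = 330 * squareVariation A T + 670 * approxError A M T + 610 * squareVariation B T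
        + 1220 * approxError B M' T := by ring
    _ ≤ 1220 * squareVariation A T + 1220 * approxError A M T + 1220 * squareVariation B T
        + 1220 * approxError B M' T := by gcongr <;> norm_num
    _ = _ := by ring

end JumpCost

section DyadicAverage

/-- The dyadic interval `[k 2^{-n}, (k + 1) 2^{-n})`. -/
def dyadicCell (n k : ℤ) : Set ℝ := dyadicIndex n ⁻¹' {k}

lemma dyadicCell_eq_Ico (n k : ℤ) :
    dyadicCell n k = Set.Ico (k * (2 : ℝ) ^ (-n)) ((k + 1) * (2 : ℝ) ^ (-n)) := by
  ext z
  have hpos : (0 : ℝ) < 2 ^ n := by positivity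
  rw [dyadicCell, Set.mem_preimage, Set.mem_singleton_iff, dyadicIndex, Int.floor_eq_iff,
    Set.mem_Ico, zpow_neg, ← div_eq_mul_inv, ← div_eq_mul_inv, div_le_iff₀' hpos,
    lt_div_iff₀' hpos]

lemma measurableSet_dyadicCell (n k : ℤ) : MeasurableSet (dyadicCell n k) :=
  measurable_dyadicIndex n (measurableSet_singleton k)

lemma volume_dyadicCell (n k : ℤ) : volume (dyadicCell n k) = ENNReal.ofReal (2 ^ (-n)) := by
  rw [dyadicCell_eq_Ico, Real.volume_Ico]
  congr 1
  ring

lemma volume_dyadicCell_ne_zero (n k : ℤ) : volume (dyadicCell n k) ≠ 0 := by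
  rw [volume_dyadicCell, ENNReal.ofReal_ne_zero_iff]
  positivity

lemma volume_dyadicCell_ne_top (n k : ℤ) : volume (dyadicCell n k) ≠ ∞ := by
  simp [volume_dyadicCell]

lemma dyadicCell_eq_union (n k : ℤ) :
    dyadicCell n k = dyadicCell (n + 1) (2 * k) ∪ dyadicCell (n + 1) (2 * k + 1) := by
  ext z
  simp only [dyadicCell, Set.mem_preimage, Set.mem_singleton_iff, Set.mem_union,
    dyadicIndex_eq_ediv_two n z]
  lia

lemma disjoint_dyadicCell (n : ℤ) {k l : ℤ} (hkl : k ≠ l) :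
    Disjoint (dyadicCell n k) (dyadicCell n l) :=
  Disjoint.preimage _ (Set.disjoint_singleton.2 hkl)

lemma abs_sub_le_of_dyadicIndex_eq {n : ℤ} {x z : ℝ} (h : dyadicIndex n z = dyadicIndex n x) :
    |x - z| ≤ (2 : ℝ) ^ (-n) := by
  have hx : x ∈ dyadicCell n (dyadicIndex n x) := rfl
  have hz : z ∈ dyadicCell n (dyadicIndex n x) := h
  rw [dyadicCell_eq_Ico] at hx hz
  calc |x - z| ≤ (dyadicIndex n x + 1) * (2 : ℝ) ^ (-n) - dyadicIndex n x * (2 : ℝ) ^ (-n) :=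
        Real.dist_le_of_mem_Icc (Set.Ico_subset_Icc_self hx) (Set.Ico_subset_Icc_self hz)
    _ = (2 : ℝ) ^ (-n) := by ring

variable {E : Type*} [NormedAddCommGroup E]

lemma integrableOn_dyadicCell {F : ℝ → E} (hF : LocallyIntegrable F) (n k : ℤ) :
    IntegrableOn F (dyadicCell n k) := by
  rw [dyadicCell_eq_Ico]
  exact (hF.integrableOn_isCompact isCompact_Icc).mono_set Set.Ico_subset_Icc_self

variable [NormedSpace ℝ E]

/-- The average of `F` over the dyadic interval of length `2^{-n}` that contains `x`. -/
def dyadicAverage (n : ℤ) (F : ℝ → E) (x : ℝ) : E := ⨍ z in dyadicCell n (dyadicIndex n x), F z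

lemma isDyadicStep_dyadicAverage (n : ℤ) (F : ℝ → E) : IsDyadicStep n (dyadicAverage n F) :=
  fun x y hxy => by rw [dyadicAverage, dyadicAverage, hxy]

lemma setAverage_dyadicCell_eq (n k : ℤ) (F : ℝ → E) :
    ⨍ z in dyadicCell n k, F z = (2 : ℝ) ^ n • ∫ z in dyadicCell n k, F z := by
  rw [setAverage_eq, measureReal_def, volume_dyadicCell, toReal_ofReal (by positivity), zpow_neg,
    inv_inv]

lemma dyadicAverage_sum {ι : Type*} (s : Finset ι) (n : ℤ) {F : ι → ℝ → E}
    (hF : ∀ i ∈ s, LocallyIntegrable (F i)) (x : ℝ) :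
    dyadicAverage n (fun z => ∑ i ∈ s, F i z) x = ∑ i ∈ s, dyadicAverage n (F i) x := by
  simp only [dyadicAverage, setAverage_dyadicCell_eq]
  rw [integral_finsetSum _ fun i hi => integrableOn_dyadicCell (hF i hi) n _, Finset.smul_sum]

lemma lintegral_eq_tsum_dyadicCell (n : ℤ) (h : ℝ → ℝ≥0∞) :
    ∫⁻ x, h x = ∑' k, ∫⁻ x in dyadicCell n k, h x := by
  rw [← lintegral_iUnion (measurableSet_dyadicCell n) fun _ _ => disjoint_dyadicCell n,
    show ⋃ k, dyadicCell n k = Set.univ from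
      Set.iUnion_eq_univ_iff.2 fun x => ⟨dyadicIndex n x, rfl⟩, setLIntegral_univ]

lemma lintegral_enorm_dyadicAverage_le (n : ℤ) (F : ℝ → E) :
    ∫⁻ x, ‖dyadicAverage n F x‖ₑ ≤ ∫⁻ x, ‖F x‖ₑ := by
  have hcell (k : ℤ) :
      ∫⁻ x in dyadicCell n k, ‖dyadicAverage n F x‖ₑ ≤ ∫⁻ x in dyadicCell n k, ‖F x‖ₑ :=
    calc ∫⁻ x in dyadicCell n k, ‖dyadicAverage n F x‖ₑ
        = ∫⁻ _ in dyadicCell n k, ‖⨍ z in dyadicCell n k, F z‖ₑ :=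
          setLIntegral_congr_fun (measurableSet_dyadicCell n k) fun x hx => by
            rw [dyadicAverage, show dyadicIndex n x = k from hx]
      _ ≤ (⨍⁻ z in dyadicCell n k, ‖F z‖ₑ ∂volume) * volume (dyadicCell n k) := by
          rw [setLIntegral_const]
          gcongr
          exact enorm_integral_le_lintegral_enorm _
      _ = ∫⁻ x in dyadicCell n k, ‖F x‖ₑ := by
          rw [mul_comm, measure_mul_setLAverage _ (volume_dyadicCell_ne_top n k)]
  rw [lintegral_eq_tsum_dyadicCell n, lintegral_eq_tsum_dyadicCell n fun x => ‖F x‖ₑ]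
  exact ENNReal.tsum_le_tsum hcell

lemma enorm_sub_dyadicAverage_le [CompleteSpace E] {F : ℝ → E} (hF : LocallyIntegrable F) {n : ℤ}
    {x : ℝ} {c : ℝ≥0∞} (hc : ∀ z, dyadicIndex n z = dyadicIndex n x → ‖F x - F z‖ₑ ≤ c) :
    ‖F x - dyadicAverage n F x‖ₑ ≤ c := by
  have hmem : dyadicAverage n F x ∈ Metric.closedEBall (F x) c :=
    (convex_closedEBall (F x) c).set_average_mem Metric.isClosed_closedEBall
      (volume_dyadicCell_ne_zero _ _) (volume_dyadicCell_ne_top _ _)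
      (ae_restrict_of_forall_mem (measurableSet_dyadicCell _ _) fun z hz => by
        rw [Metric.mem_closedEBall, edist_comm, edist_eq_enorm_sub]
        exact hc z hz)
      (integrableOn_dyadicCell hF _ _)
  rwa [Metric.mem_closedEBall, edist_comm, edist_eq_enorm_sub] at hmem

lemma two_smul_setAverage_dyadicCell {F : ℝ → E} (hF : LocallyIntegrable F) (n k : ℤ) :
    (2 : ℝ) • ⨍ z in dyadicCell n k, F z =
      (⨍ z in dyadicCell (n + 1) (2 * k), F z) + ⨍ z in dyadicCell (n + 1) (2 * k + 1), F z := by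
  simp only [setAverage_dyadicCell_eq]
  rw [dyadicCell_eq_union n k, setIntegral_union (disjoint_dyadicCell _ (by lia))
    (measurableSet_dyadicCell _ _) (integrableOn_dyadicCell hF _ _)
    (integrableOn_dyadicCell hF _ _), zpow_add_one₀ two_ne_zero, ← smul_add, smul_smul, mul_comm]

lemma dyadicAverage_sibling {F : ℝ → E} (hF : LocallyIntegrable F) (n : ℤ) (x : ℝ) :
    dyadicAverage (n + 1) F (dyadicSibling (n + 1) x) - dyadicAverage n F x =
      -(dyadicAverage (n + 1) F x - dyadicAverage n F x) := by
  have hhalf : dyadicIndex n x = dyadicIndex (n + 1) x / 2 := dyadicIndex_eq_ediv_two n x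
  have htwo := two_smul_setAverage_dyadicCell hF n (dyadicIndex n x)
  rw [eq_neg_iff_add_eq_zero, sub_add_sub_comm, ← two_smul ℝ (dyadicAverage n F x), sub_eq_zero]
  simp only [dyadicAverage, htwo, dyadicSibling]
  split_ifs with h
  · rw [dyadicIndex_add, show 2 * dyadicIndex n x = dyadicIndex (n + 1) x by grind, add_comm]
  · rw [dyadicIndex_sub, show 2 * dyadicIndex n x = dyadicIndex (n + 1) x - 1 by grind,
      sub_add_cancel]

lemma isDyadicMartingale_dyadicAverage (a : ℤ) {F : ℝ → E} (hF : LocallyIntegrable F) :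
    IsDyadicMartingale a fun t => dyadicAverage (a + t) F where
  isDyadicStep t := isDyadicStep_dyadicAverage (a + t) F
  sibling t x := by
    simpa only [Nat.cast_succ, ← add_assoc] using dyadicAverage_sibling hF (a + t) x

end DyadicAverage

section SchurTest

variable {α β : Type*} [MeasurableSpace α] [MeasurableSpace β]

lemma lintegral_mul_sq_le {μ : Measure α} {k f : α → ℝ≥0∞} (hk : AEMeasurable k μ)
    (hf : AEMeasurable f μ) :
    (∫⁻ y, k y * f y ∂μ) ^ 2 ≤ (∫⁻ y, k y ∂μ) * ∫⁻ y, k y * f y ^ 2 ∂μ := by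
  have hsq (a : ℝ≥0∞) : (a ^ (1 / 2 : ℝ)) ^ 2 = a := by
    rw [← rpow_two, ← ENNReal.rpow_mul]
    norm_num
  have hfactor (y : α) : k y * f y = k y ^ (1 / 2 : ℝ) * (k y ^ (1 / 2 : ℝ) * f y) := by
    rw [← mul_assoc, ← sq, hsq]
  have holder := ENNReal.lintegral_mul_le_Lp_mul_Lq μ Real.HolderConjugate.two_two
    (hk.pow_const (1 / 2 : ℝ)) ((hk.pow_const (1 / 2 : ℝ)).mul hf)
  simp only [Pi.mul_apply, ← hfactor, rpow_two, mul_pow, hsq] at holder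
  calc (∫⁻ y, k y * f y ∂μ) ^ 2 ≤ _ := pow_le_pow_left' holder 2
    _ = _ := by rw [mul_pow, hsq, hsq]

theorem lintegral_kernel_sq_le {μ : Measure α} {ν : Measure β} [SFinite μ] [SFinite ν]
    {k : α → β → ℝ≥0∞} (hk : Measurable (Function.uncurry k)) {f : β → ℝ≥0∞}
    (hf : AEMeasurable f ν) {A B : ℝ≥0∞} (hA : ∀ x, ∫⁻ y, k x y ∂ν ≤ A)
    (hB : ∀ y, ∫⁻ x, k x y ∂μ ≤ B) :
    ∫⁻ x, (∫⁻ y, k x y * f y ∂ν) ^ 2 ∂μ ≤ A * B * ∫⁻ y, f y ^ 2 ∂ν := by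
  have hprod : AEMeasurable (Function.uncurry fun x y => k x y * f y ^ 2) (μ.prod ν) :=
    hk.aemeasurable.mul (hf.comp_snd.pow_const 2)
  calc ∫⁻ x, (∫⁻ y, k x y * f y ∂ν) ^ 2 ∂μ
      ≤ ∫⁻ x, A * ∫⁻ y, k x y * f y ^ 2 ∂ν ∂μ := lintegral_mono fun x =>
        (lintegral_mul_sq_le hk.of_uncurry_left.aemeasurable hf).trans <| by gcongr; exact hA x
    _ = A * ∫⁻ y, (∫⁻ x, k x y ∂μ) * f y ^ 2 ∂ν := by
        rw [lintegral_const_mul'' _ hprod.lintegral_prod_right, lintegral_lintegral_swap hprod]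
        congr with y
        rw [lintegral_mul_const _ hk.of_uncurry_right]
    _ ≤ A * ∫⁻ y, B * f y ^ 2 ∂ν := by
        gcongr with y
        exact hB y
    _ = A * B * ∫⁻ y, f y ^ 2 ∂ν := by rw [lintegral_const_mul'' _ (hf.pow_const 2), mul_assoc]

theorem lintegral_convolution_sq_le {h f : ℝ → ℝ≥0∞} (hh : Measurable h) (hf : AEMeasurable f) :
    ∫⁻ x, (∫⁻ y, h (x - y) * f y) ^ 2 ≤ (∫⁻ u, h u) ^ 2 * ∫⁻ y, f y ^ 2 := by
  rw [sq (∫⁻ u, h u)]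
  exact lintegral_kernel_sq_le (k := fun x y => h (x - y)) (hh.comp measurable_sub) hf
    (fun x => (lintegral_sub_left_eq_self h x).le) fun y => (lintegral_sub_right_eq_self h y).le

end SchurTest

section AlmostOrthogonality

variable {ι κ : Type*} {E : Type*} [NormedAddCommGroup E]

lemma enorm_sum_sq_le (s : Finset ι) {w : ι → ℝ≥0} (hw : ∀ i ∈ s, w i ≠ 0) (z : ι → E) :
    ‖∑ i ∈ s, z i‖ₑ ^ 2 ≤
      (∑ i ∈ s, (w i : ℝ≥0∞)) * ∑ i ∈ s, (w i : ℝ≥0∞)⁻¹ * ‖z i‖ₑ ^ 2 := by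
  have hcs : (∑ i ∈ s, ‖z i‖₊) ^ 2 ≤ (∑ i ∈ s, w i) * ∑ i ∈ s, (w i)⁻¹ * ‖z i‖₊ ^ 2 :=
    s.sum_sq_le_sum_mul_sum_of_sq_le_mul (fun _ _ => zero_le) (fun _ _ => zero_le) fun i hi => by
      rw [mul_inv_cancel_left₀ (hw i hi)]
  have hnorm := (pow_le_pow_left' (nnnorm_sum_le s z) 2).trans hcs
  calc ‖∑ i ∈ s, z i‖ₑ ^ 2 ≤ (((∑ i ∈ s, w i) * ∑ i ∈ s, (w i)⁻¹ * ‖z i‖₊ ^ 2 : ℝ≥0) : ℝ≥0∞) := by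
        rw [enorm_eq_nnnorm]
        exact_mod_cast hnorm
    _ = (∑ i ∈ s, (w i : ℝ≥0∞)) * ∑ i ∈ s, (w i : ℝ≥0∞)⁻¹ * ‖z i‖ₑ ^ 2 := by
        push_cast
        congr 1
        exact Finset.sum_congr rfl fun i hi => by rw [coe_inv (hw i hi), enorm_eq_nnnorm]

theorem sum_lintegral_enorm_sum_sq_le {α : Type*} [MeasurableSpace α] {μ : Measure α}
    {s : Finset κ} {r : Finset ι} {X : κ → ι → α → E}
    (hX : ∀ t i, AEStronglyMeasurable (X t i) μ) {w : κ → ι → ℝ≥0} (hw : ∀ t i, w t i ≠ 0)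
    {A B : ℝ≥0∞} (hA : ∀ t, ∑ i ∈ r, (w t i : ℝ≥0∞) ≤ A) (hB : ∀ i, ∑ t ∈ s, (w t i : ℝ≥0∞) ≤ B)
    {b : ι → ℝ≥0∞} (hb : ∀ t ∈ s, ∀ i ∈ r, ∫⁻ x, ‖X t i x‖ₑ ^ 2 ∂μ ≤ (w t i : ℝ≥0∞) ^ 2 * b i) :
    ∑ t ∈ s, ∫⁻ x, ‖∑ i ∈ r, X t i x‖ₑ ^ 2 ∂μ ≤ A * B * ∑ i ∈ r, b i := by
  have hrow (t : κ) (ht : t ∈ s) :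
      ∫⁻ x, ‖∑ i ∈ r, X t i x‖ₑ ^ 2 ∂μ ≤ A * ∑ i ∈ r, (w t i : ℝ≥0∞) * b i := by
    have hinv_ne_top (i : ι) : (w t i : ℝ≥0∞)⁻¹ ≠ ∞ := inv_ne_top.2 (coe_ne_zero.2 (hw t i))
    calc ∫⁻ x, ‖∑ i ∈ r, X t i x‖ₑ ^ 2 ∂μ
        ≤ ∫⁻ x, A * ∑ i ∈ r, (w t i : ℝ≥0∞)⁻¹ * ‖X t i x‖ₑ ^ 2 ∂μ := lintegral_mono fun x =>
          (enorm_sum_sq_le r (fun i _ => hw t i) (X t · x)).trans <| by gcongr; exact hA t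
      _ = A * ∑ i ∈ r, (w t i : ℝ≥0∞)⁻¹ * ∫⁻ x, ‖X t i x‖ₑ ^ 2 ∂μ := by
          rw [lintegral_const_mul'' A (by fun_prop), lintegral_finsetSum' r (by fun_prop)]
          simp only [lintegral_const_mul' _ _ (hinv_ne_top _)]
      _ ≤ A * ∑ i ∈ r, (w t i : ℝ≥0∞)⁻¹ * ((w t i : ℝ≥0∞) ^ 2 * b i) := by
          gcongr with i hi
          exact hb t ht i hi
      _ = A * ∑ i ∈ r, (w t i : ℝ≥0∞) * b i := by
          congr with i
          rw [sq, mul_assoc, ENNReal.inv_mul_cancel_left (coe_ne_zero.2 (hw t i)) coe_ne_top]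
  calc ∑ t ∈ s, ∫⁻ x, ‖∑ i ∈ r, X t i x‖ₑ ^ 2 ∂μ
      ≤ ∑ t ∈ s, A * ∑ i ∈ r, (w t i : ℝ≥0∞) * b i := Finset.sum_le_sum hrow
    _ = A * ∑ i ∈ r, (∑ t ∈ s, (w t i : ℝ≥0∞)) * b i := by
        rw [← Finset.mul_sum, Finset.sum_comm]
        simp only [Finset.sum_mul]
    _ ≤ A * ∑ i ∈ r, B * b i := by
        gcongr with i
        exact hB i
    _ = A * B * ∑ i ∈ r, b i := by rw [← Finset.mul_sum, mul_assoc]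

lemma tsum_pow_natAbs_ne_top {r : ℝ≥0} (hr : r < 1) : ∑' m : ℤ, (r : ℝ≥0∞) ^ m.natAbs ≠ ∞ := by
  have hsum : Summable fun m : ℤ => r ^ m.natAbs := by
    have hgeom : Summable fun n : ℕ => (r : ℝ) ^ n := summable_geometric_of_lt_one r.2 hr
    rw [← NNReal.summable_coe]
    exact .of_nat_of_neg (by simpa using hgeom) (by simpa using hgeom)
  simpa using ENNReal.tsum_coe_ne_top_iff_summable.2 hsum

lemma sum_pow_natAbs_sub_le (r : ℝ≥0∞) (s : Finset ℤ) (n : ℤ) :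
    ∑ i ∈ s, r ^ (i - n).natAbs ≤ ∑' m : ℤ, r ^ m.natAbs :=
  (ENNReal.sum_le_tsum s).trans_eq <| (Equiv.subRight n).tsum_eq fun m : ℤ => r ^ m.natAbs

end AlmostOrthogonality

section Convolution

variable {K f : ℝ → ℂ}

lemma lintegral_enorm_conv_sq_le (hK : Measurable K) (hf : AEStronglyMeasurable f) :
    ∫⁻ x, ‖conv K f x‖ₑ ^ 2 ≤ (∫⁻ u, ‖K u‖ₑ) ^ 2 * ∫⁻ y, ‖f y‖ₑ ^ 2 :=
  calc ∫⁻ x, ‖conv K f x‖ₑ ^ 2 ≤ ∫⁻ x, (∫⁻ y, ‖K (x - y)‖ₑ * ‖f y‖ₑ) ^ 2 := by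
        gcongr with x
        simpa only [conv, enorm_mul] using
          enorm_integral_le_lintegral_enorm fun y => K (x - y) * f y
    _ ≤ (∫⁻ u, ‖K u‖ₑ) ^ 2 * ∫⁻ y, ‖f y‖ₑ ^ 2 := lintegral_convolution_sq_le hK.enorm hf.enorm

lemma aestronglyMeasurable_conv (hK : Measurable K) (hf : AEStronglyMeasurable f) :
    AEStronglyMeasurable (conv K f) :=
  ((hK.comp measurable_sub).aestronglyMeasurable.mul hf.comp_snd).integral_prod_right'

lemma eLpNorm_two_sq {α E : Type*} [MeasurableSpace α] {μ : Measure α} [NormedAddCommGroup E]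
    (h : α → E) : eLpNorm h 2 μ ^ (2 : ℝ) = ∫⁻ x, ‖h x‖ₑ ^ 2 ∂μ := by
  simpa using eLpNorm_nnreal_pow_eq_lintegral (μ := μ) (f := h) (p := 2) two_ne_zero

lemma memLp_two_iff_lintegral_lt_top {α E : Type*} [MeasurableSpace α] {μ : Measure α}
    [NormedAddCommGroup E] {h : α → E} (hh : AEStronglyMeasurable h μ) :
    MemLp h 2 μ ↔ ∫⁻ x, ‖h x‖ₑ ^ 2 ∂μ < ∞ := by
  rw [← eLpNorm_two_sq, rpow_lt_top_iff_of_pos two_pos, MemLp, and_iff_right hh]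

lemma memLp_conv (hK : Measurable K) (hK_int : Integrable K) (hf : MemLp f 2) :
    MemLp (conv K f) 2 := by
  rw [memLp_two_iff_lintegral_lt_top (aestronglyMeasurable_conv hK hf.1)]
  refine (lintegral_enorm_conv_sq_le hK hf.1).trans_lt (mul_lt_top (pow_lt_top hK_int.2) ?_)
  exact (memLp_two_iff_lintegral_lt_top hf.1).1 hf

lemma locallyIntegrable_conv (hK : Measurable K) (hK_int : Integrable K) (hf : MemLp f 2) :
    LocallyIntegrable (conv K f) :=
  (memLp_conv hK hK_int hf).locallyIntegrable one_le_two

lemma integrable_conv_integrand (hK : MemLp K 2) (hf : MemLp f 2) (x : ℝ) :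
    Integrable fun y => K (x - y) * f y :=
  (hK.comp_measurePreserving (volume.measurePreserving_sub_left x)).integrable_mul hf

theorem lintegral_conv_sub_dyadicAverage_sq_le (hK : Measurable K) (hK_int : Integrable K)
    (hK_two : MemLp K 2) (hf : MemLp f 2) {n : ℤ} {ψ : ℝ → ℝ≥0∞} (hψ : Measurable ψ)
    (hKψ : ∀ u v, |u - v| ≤ (2 : ℝ) ^ (-n) → ‖K u - K v‖ₑ ≤ ψ u) :
    ∫⁻ x, ‖conv K f x - dyadicAverage n (conv K f) x‖ₑ ^ 2 ≤
      (∫⁻ u, ψ u) ^ 2 * ∫⁻ y, ‖f y‖ₑ ^ 2 := by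
  refine le_trans ?_ (lintegral_convolution_sq_le hψ hf.1.enorm)
  gcongr with x
  refine enorm_sub_dyadicAverage_le (locallyIntegrable_conv hK hK_int hf) fun z hz => ?_
  calc ‖conv K f x - conv K f z‖ₑ = ‖∫ y, (K (x - y) - K (z - y)) * f y‖ₑ := by
        rw [conv, conv, ← integral_sub (integrable_conv_integrand hK_two hf x)
          (integrable_conv_integrand hK_two hf z)]
        simp only [sub_mul]
    _ ≤ ∫⁻ y, ‖K (x - y) - K (z - y)‖ₑ * ‖f y‖ₑ := by
        simpa only [enorm_mul] using
          enorm_integral_le_lintegral_enorm fun y => (K (x - y) - K (z - y)) * f y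
    _ ≤ ∫⁻ y, ψ (x - y) * ‖f y‖ₑ := by
        gcongr with y
        exact hKψ _ _ (by simpa using abs_sub_le_of_dyadicIndex_eq hz)

/-- The mass of `K` outside the open interval with endpoints `±p`, which dominates the
primitive of `K` at `p` when `K` has mean zero. -/
def tailMass (K : ℝ → ℂ) (p : ℝ) : ℝ≥0∞ := ∫⁻ z in {z | |p| ≤ |z|}, ‖K z‖ₑ

lemma tailMass_eq_lintegral_indicator (K : ℝ → ℂ) (p : ℝ) :
    tailMass K p = ∫⁻ z, {q : ℝ × ℝ | |q.1| ≤ |q.2|}.indicator (fun q => ‖K q.2‖ₑ) (p, z) := by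
  rw [tailMass, ← lintegral_indicator (measurableSet_le (by fun_prop) (by fun_prop))]
  rfl

lemma measurable_tailMass_integrand (hK : Measurable K) :
    Measurable ({q : ℝ × ℝ | |q.1| ≤ |q.2|}.indicator fun q => ‖K q.2‖ₑ) :=
  (hK.enorm.comp measurable_snd).indicator
    (measurableSet_le measurable_fst.norm measurable_snd.norm)

lemma measurable_tailMass (hK : Measurable K) : Measurable (tailMass K) := by
  simp only [funext (tailMass_eq_lintegral_indicator K)]
  exact (measurable_tailMass_integrand hK).lintegral_prod_right'

lemma lintegral_tailMass (hK : Measurable K) :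
    ∫⁻ p, tailMass K p = 2 * ∫⁻ z, ‖z‖ₑ * ‖K z‖ₑ := by
  have hinner (z : ℝ) :
      ∫⁻ p, {q : ℝ × ℝ | |q.1| ≤ |q.2|}.indicator (fun q => ‖K q.2‖ₑ) (p, z) =
        2 * (‖z‖ₑ * ‖K z‖ₑ) :=
    calc _ = ∫⁻ p, (Metric.closedBall (0 : ℝ) |z|).indicator (fun _ => ‖K z‖ₑ) p := by
          simp only [Set.indicator, Set.mem_ofPred_eq, mem_closedBall_zero_iff, Real.norm_eq_abs]
      _ = 2 * (‖z‖ₑ * ‖K z‖ₑ) := by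
          rw [lintegral_indicator_const Metric.isClosed_closedBall.measurableSet,
            Real.volume_closedBall, ofReal_mul zero_le_two, ← Real.enorm_eq_ofReal_abs,
            ofReal_ofNat]
          ring
  simp only [tailMass_eq_lintegral_indicator]
  rw [lintegral_lintegral_swap (by exact (measurable_tailMass_integrand hK).aemeasurable)]
  simp only [hinner]
  exact lintegral_const_mul' _ _ ofNat_ne_top

lemma enorm_setIntegral_Iic_le_tailMass (hK_int : Integrable K) (hK_zero : ∫ u, K u = 0) (p : ℝ) :
    ‖∫ z in Set.Iic p, K z‖ₑ ≤ tailMass K p := by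
  have hsubset {s : Set ℝ} (hs : s ⊆ {z | |p| ≤ |z|}) : ‖∫ z in s, K z‖ₑ ≤ tailMass K p :=
    (enorm_integral_le_lintegral_enorm _).trans (lintegral_mono_set hs)
  rcases le_or_gt p 0 with hp | hp
  · exact hsubset fun z (hz : z ≤ p) => abs_le_abs_of_nonpos hp hz
  · have hadd := intervalIntegral.integral_Iic_add_Ioi (b := p) hK_int.integrableOn
      hK_int.integrableOn
    rw [eq_neg_of_add_eq_zero_left (hadd.trans hK_zero), enorm_neg]
    exact hsubset fun z (hz : p < z) => abs_le_abs_of_nonneg hp.le hz.le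

lemma enorm_setIntegral_Ico_comp_sub_le (hK_int : Integrable K) (hK_zero : ∫ u, K u = 0) {a b : ℝ}
    (hab : a ≤ b) (y : ℝ) :
    ‖∫ z in Set.Ico a b, K (z - y)‖ₑ ≤ tailMass K (b - y) + tailMass K (a - y) := by
  rw [integral_Ico_eq_integral_Ioc, ← intervalIntegral.integral_of_le hab,
    intervalIntegral.integral_comp_sub_right, ← intervalIntegral.integral_Iic_sub_Iic
      hK_int.integrableOn hK_int.integrableOn]
  exact enorm_sub_le.trans <| add_le_add (enorm_setIntegral_Iic_le_tailMass hK_int hK_zero _)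
    (enorm_setIntegral_Iic_le_tailMass hK_int hK_zero _)

lemma lintegral_enorm_dyadicAverage_comp_sub_le (hK : Measurable K) (hK_int : Integrable K)
    (hK_zero : ∫ u, K u = 0) (n : ℤ) (x : ℝ) :
    ∫⁻ y, ‖dyadicAverage n (fun z => K (z - y)) x‖ₑ ≤
      4 * ENNReal.ofReal (2 ^ n) * ∫⁻ z, ‖z‖ₑ * ‖K z‖ₑ := by
  have htail := measurable_tailMass hK
  set a := dyadicIndex n x * (2 : ℝ) ^ (-n)
  set b := (dyadicIndex n x + 1) * (2 : ℝ) ^ (-n)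
  have hab : a ≤ b := by
    dsimp only [a, b]
    gcongr
    simp
  have hkernel (y : ℝ) : ‖dyadicAverage n (fun z => K (z - y)) x‖ₑ ≤
      ENNReal.ofReal (2 ^ n) * (tailMass K (b - y) + tailMass K (a - y)) := by
    rw [dyadicAverage, setAverage_dyadicCell_eq, enorm_smul,
      Real.enorm_eq_ofReal (by positivity), dyadicCell_eq_Ico]
    gcongr
    exact enorm_setIntegral_Ico_comp_sub_le hK_int hK_zero hab y
  calc ∫⁻ y, ‖dyadicAverage n (fun z => K (z - y)) x‖ₑ
      ≤ ∫⁻ y, ENNReal.ofReal (2 ^ n) * (tailMass K (b - y) + tailMass K (a - y)) :=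
        lintegral_mono hkernel
    _ = ENNReal.ofReal (2 ^ n) * ((∫⁻ p, tailMass K p) + ∫⁻ p, tailMass K p) := by
        rw [lintegral_const_mul' _ _ ofReal_ne_top, lintegral_add_left (by fun_prop),
          lintegral_sub_left_eq_self (tailMass K), lintegral_sub_left_eq_self (tailMass K)]
    _ = 4 * ENNReal.ofReal (2 ^ n) * ∫⁻ z, ‖z‖ₑ * ‖K z‖ₑ := by
        rw [lintegral_tailMass hK]
        ring

lemma integrable_conv_integrand_prod (hK : Measurable K) (hK_two : MemLp K 2) (hf : MemLp f 2)
    {s : Set ℝ} (hs : volume s ≠ ∞) :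
    Integrable (Function.uncurry fun z y => K (z - y) * f y)
      ((volume.restrict s).prod volume) := by
  have hbound (z : ℝ) :
      ∫⁻ y, ‖K (z - y) * f y‖ₑ ≤ (∫⁻ u, ‖K u‖ₑ ^ 2) + ∫⁻ y, ‖f y‖ₑ ^ 2 :=
    calc ∫⁻ y, ‖K (z - y) * f y‖ₑ ≤ ∫⁻ y, (‖K (z - y)‖ₑ ^ 2 + ‖f y‖ₑ ^ 2) := by
          gcongr with y
          rw [enorm_mul]
          rcases le_total ‖K (z - y)‖ₑ ‖f y‖ₑ with h | h
          · exact le_add_left ((mul_le_mul_left h _).trans_eq (sq _).symm)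
          · exact le_add_right ((mul_le_mul_right h _).trans_eq (sq _).symm)
      _ = (∫⁻ u, ‖K u‖ₑ ^ 2) + ∫⁻ y, ‖f y‖ₑ ^ 2 := by
          rw [lintegral_add_left (by fun_prop), lintegral_sub_left_eq_self fun u => ‖K u‖ₑ ^ 2]
  have hmeas : AEStronglyMeasurable (Function.uncurry fun z y => K (z - y) * f y)
      ((volume.restrict s).prod volume) :=
    (hK.comp measurable_sub).aestronglyMeasurable.mul hf.1.comp_snd
  refine ⟨hmeas, ?_⟩
  rw [HasFiniteIntegral, lintegral_prod _ hmeas.enorm]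
  calc ∫⁻ z in s, ∫⁻ y, ‖K (z - y) * f y‖ₑ
      ≤ ∫⁻ _ in s, ((∫⁻ u, ‖K u‖ₑ ^ 2) + ∫⁻ y, ‖f y‖ₑ ^ 2) := lintegral_mono hbound
    _ < ∞ := by
      rw [setLIntegral_const]
      exact mul_lt_top (add_lt_top.2 ⟨(memLp_two_iff_lintegral_lt_top hK_two.1).1 hK_two,
        (memLp_two_iff_lintegral_lt_top hf.1).1 hf⟩) hs.lt_top

lemma dyadicAverage_conv (hK : Measurable K) (hK_two : MemLp K 2) (hf : MemLp f 2) (n : ℤ)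
    (x : ℝ) :
    dyadicAverage n (conv K f) x = ∫ y, dyadicAverage n (fun z => K (z - y)) x * f y := by
  simp only [dyadicAverage, setAverage_dyadicCell_eq, conv]
  rw [integral_integral_swap
    (integrable_conv_integrand_prod hK hK_two hf (volume_dyadicCell_ne_top _ _)), ← integral_smul]
  simp only [integral_mul_const, smul_mul_assoc]

lemma measurable_dyadicAverage_comp_sub (hK : Measurable K) (n : ℤ) :
    Measurable (Function.uncurry fun x y => dyadicAverage n (fun z => K (z - y)) x) := by
  have hcell (k : ℤ) : Measurable fun y => ⨍ z in dyadicCell n k, K (z - y) := by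
    have hsub : StronglyMeasurable (Function.uncurry fun y z => K (z - y)) :=
      (hK.comp (measurable_snd.sub measurable_fst)).stronglyMeasurable
    simp only [setAverage_dyadicCell_eq]
    exact hsub.integral_prod_right.measurable.const_smul _
  have hcells : Measurable fun p : ℤ × ℝ => ⨍ z in dyadicCell n p.1, K (z - p.2) :=
    measurable_from_prod_countable_right hcell
  have hindex : Measurable fun p : ℝ × ℝ => (dyadicIndex n p.1, p.2) :=
    ((measurable_dyadicIndex n).comp measurable_fst).prodMk measurable_snd
  simpa only [dyadicAverage, Function.uncurry_def, Function.comp_def] using hcells.comp hindex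

theorem lintegral_dyadicAverage_conv_sq_le (hK : Measurable K) (hK_int : Integrable K)
    (hK_two : MemLp K 2) (hK_zero : ∫ u, K u = 0) (hf : MemLp f 2) (n : ℤ) :
    ∫⁻ x, ‖dyadicAverage n (conv K f) x‖ₑ ^ 2 ≤
      4 * ENNReal.ofReal (2 ^ n) * (∫⁻ z, ‖z‖ₑ * ‖K z‖ₑ) * (∫⁻ u, ‖K u‖ₑ) *
        ∫⁻ y, ‖f y‖ₑ ^ 2 := by
  have hcolumn (y : ℝ) : ∫⁻ x, ‖dyadicAverage n (fun z => K (z - y)) x‖ₑ ≤ ∫⁻ u, ‖K u‖ₑ :=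
    (lintegral_enorm_dyadicAverage_le n _).trans_eq
      (lintegral_sub_right_eq_self (fun u => ‖K u‖ₑ) y)
  refine le_trans ?_ (lintegral_kernel_sq_le (measurable_dyadicAverage_comp_sub hK n).enorm
    hf.1.enorm (lintegral_enorm_dyadicAverage_comp_sub_le hK hK_int hK_zero n) hcolumn)
  gcongr with x
  rw [dyadicAverage_conv hK hK_two hf]
  simpa only [enorm_mul] using
    enorm_integral_le_lintegral_enorm fun y => dyadicAverage n (fun z => K (z - y)) x * f y

end Convolution

section ScaleLocalized

variable {𝕜 : Type*} [RCLike 𝕜]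

/-- How much `F`, regarded as living at scale `2⁻ⁱ`, fails to be reproduced by averaging at scale
`2⁻ⁿ`: the error of the dyadic averages if `i ≤ n`, and minus the averages themselves otherwise. -/
def truncationError (n i : ℤ) (F : ℝ → 𝕜) (x : ℝ) : 𝕜 :=
  (if i ≤ n then F x else 0) - dyadicAverage n F x

/-- A family of functions `F i`, each concentrated in `L²` at scale `2⁻ⁱ` with energy at most `b i`:
its interaction with the dyadic averages at scale `2⁻ⁿ` decays like `ρ ^ |i - n|`. -/
structure IsScaleLocalized (ρ : ℝ≥0) (F : ℤ → ℝ → 𝕜) (b : ℤ → ℝ≥0∞) : Prop where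
  locallyIntegrable : ∀ i, LocallyIntegrable (F i)
  lintegral_sq_le : ∀ i, ∫⁻ x, ‖F i x‖ₑ ^ 2 ≤ b i
  lintegral_truncationError_sq_le : ∀ n i,
    ∫⁻ x, ‖truncationError n i (F i) x‖ₑ ^ 2 ≤ ((ρ : ℝ≥0∞) ^ (i - n).natAbs) ^ 2 * b i

/-- The sum of the functions `F i` over the window of scales `a < i ≤ a + t`. -/
def partialSum (F : ℤ → ℝ → 𝕜) (a : ℤ) (t : ℕ) (x : ℝ) : 𝕜 :=
  ∑ i ∈ Finset.Ioc a (a + t), F i x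

lemma partialSum_succ (F : ℤ → ℝ → 𝕜) (a : ℤ) (t : ℕ) (x : ℝ) :
    partialSum F a (t + 1) x = partialSum F a t x + F (a + t + 1) x := by
  have hIoc : Finset.Ioc a (a + (t + 1 : ℕ)) = insert (a + t + 1) (Finset.Ioc a (a + t)) := by
    ext i
    simp only [Finset.mem_Ioc, Finset.mem_insert]
    lia
  rw [partialSum, hIoc, Finset.sum_insert (by simp), add_comm, partialSum]

lemma partialSum_sub_partialSum (F : ℤ → ℝ → 𝕜) (a : ℤ) {m n : ℕ} (hmn : m ≤ n) (x : ℝ) :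
    partialSum F a n x - partialSum F a m x =
      ∑ i ∈ Finset.Ioo (a + m) (a + n + 1), F i x := by
  have hsub : Finset.Ioc a (a + m) ⊆ Finset.Ioc a (a + n) := Finset.Ioc_subset_Ioc_right (by lia)
  rw [partialSum, partialSum, ← Finset.sum_sdiff hsub, add_sub_cancel_right]
  congr 1
  ext i
  simp only [Finset.mem_Ioc, Finset.mem_Ioo, Finset.mem_sdiff]
  lia

namespace IsScaleLocalized

variable {ρ : ℝ≥0} {F : ℤ → ℝ → 𝕜} {b : ℤ → ℝ≥0∞}

lemma const_smul (hF : IsScaleLocalized ρ F b) (z : 𝕜) :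
    IsScaleLocalized ρ (fun i => z • F i) fun i => ‖z‖ₑ ^ 2 * b i := by
  have hsmul (h : ℝ → 𝕜) : ∫⁻ x, ‖z • h x‖ₑ ^ 2 = ‖z‖ₑ ^ 2 * ∫⁻ x, ‖h x‖ₑ ^ 2 := by
    simp only [enorm_smul, mul_pow]
    exact lintegral_const_mul' _ _ (by finiteness)
  refine ⟨fun i => (hF.locallyIntegrable i).smul z, fun i => ?_, fun n i => ?_⟩
  · exact (hsmul (F i)).trans_le (by gcongr; exact hF.lintegral_sq_le i)
  · have herror (x : ℝ) : truncationError n i (z • F i) x = z • truncationError n i (F i) x := by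
      simp only [truncationError, dyadicAverage, average_eq, Pi.smul_apply, smul_sub, smul_ite,
        smul_zero, integral_smul, smul_comm z]
    simp only [herror]
    rw [hsmul, mul_left_comm]
    gcongr
    exact hF.lintegral_truncationError_sq_le n i

lemma locallyIntegrable_partialSum (hF : IsScaleLocalized ρ F b) (a : ℤ) (t : ℕ) :
    LocallyIntegrable (partialSum F a t) :=
  locallyIntegrable_finsetSum _ fun i _ => hF.locallyIntegrable i

lemma isDyadicMartingale_dyadicAverage_partialSum (hF : IsScaleLocalized ρ F b) (a : ℤ) (T : ℕ) :
    IsDyadicMartingale a fun t => dyadicAverage (a + t) (partialSum F a T) :=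
  isDyadicMartingale_dyadicAverage a (hF.locallyIntegrable_partialSum a T)

lemma aestronglyMeasurable_truncationError (hF : IsScaleLocalized ρ F b) (n i : ℤ) :
    AEStronglyMeasurable (truncationError n i (F i)) := by
  refine AEStronglyMeasurable.sub ?_
    (isDyadicStep_dyadicAverage n (F i)).measurable.aestronglyMeasurable
  split_ifs
  · exact (hF.locallyIntegrable i).aestronglyMeasurable
  · exact aestronglyMeasurable_const

lemma partialSum_sub_dyadicAverage (hF : IsScaleLocalized ρ F b) (a : ℤ) {t T : ℕ} (htT : t ≤ T)
    (x : ℝ) :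
    partialSum F a t x - dyadicAverage (a + t) (partialSum F a T) x =
      ∑ i ∈ Finset.Ioc a (a + T), truncationError (a + t) i (F i) x := by
  have hIoc : Finset.Ioc a (a + t) = {i ∈ Finset.Ioc a (a + T) | i ≤ a + t} := by
    ext i
    simp only [Finset.mem_Ioc, Finset.mem_filter]
    lia
  simp only [truncationError, Finset.sum_sub_distrib]
  rw [← Finset.sum_filter, ← hIoc,
    ← dyadicAverage_sum _ _ fun i _ => hF.locallyIntegrable i]
  rfl

lemma squareVariation_partialSum_le (hF : IsScaleLocalized ρ F b) (a : ℤ) (T : ℕ) :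
    squareVariation (partialSum F a) T ≤ ∑' i, b i :=
  calc squareVariation (partialSum F a) T ≤ ∑ t ∈ Finset.range T, b (a + t + 1) := by
        refine Finset.sum_le_sum fun t _ => ?_
        simp only [partialSum_succ, add_sub_cancel_left]
        exact hF.lintegral_sq_le _
    _ ≤ ∑' t : ℕ, b (a + t + 1) := ENNReal.sum_le_tsum _
    _ ≤ ∑' i, b i := ENNReal.tsum_comp_le_tsum_of_injective (fun s t hst => by lia) b

lemma approxError_partialSum_le (hF : IsScaleLocalized ρ F b) (hρ : ρ ≠ 0) (a : ℤ) (T : ℕ) :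
    approxError (partialSum F a) (fun t => dyadicAverage (a + t) (partialSum F a T)) T ≤
      (∑' m : ℤ, (ρ : ℝ≥0∞) ^ m.natAbs) ^ 2 * ∑' i, b i := by
  have hrow (t : ℕ) : ∑ i ∈ Finset.Ioc a (a + T), ((ρ ^ (i - (a + t)).natAbs : ℝ≥0) : ℝ≥0∞) ≤
      ∑' m : ℤ, (ρ : ℝ≥0∞) ^ m.natAbs := by
    simpa only [ENNReal.coe_pow] using sum_pow_natAbs_sub_le ρ _ _
  have hcolumn (i : ℤ) :
      ∑ t ∈ Finset.range (T + 1), ((ρ ^ (i - (a + t)).natAbs : ℝ≥0) : ℝ≥0∞) ≤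
        ∑' m : ℤ, (ρ : ℝ≥0∞) ^ m.natAbs := by
    simp only [ENNReal.coe_pow]
    refine (ENNReal.sum_le_tsum _).trans (ENNReal.tsum_comp_le_tsum_of_injective
      (f := fun t : ℕ => i - (a + t)) (fun s t hst => by simpa using hst)
      fun m => (ρ : ℝ≥0∞) ^ m.natAbs)
  calc approxError (partialSum F a) (fun t => dyadicAverage (a + t) (partialSum F a T)) T
      = ∑ t ∈ Finset.range (T + 1),
          ∫⁻ x, ‖∑ i ∈ Finset.Ioc a (a + T), truncationError (a + t) i (F i) x‖ₑ ^ 2 := by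
        refine Finset.sum_congr rfl fun t ht => ?_
        simp only [hF.partialSum_sub_dyadicAverage a (Finset.mem_range_succ_iff.1 ht)]
    _ ≤ (∑' m : ℤ, (ρ : ℝ≥0∞) ^ m.natAbs) * (∑' m : ℤ, (ρ : ℝ≥0∞) ^ m.natAbs) *
          ∑ i ∈ Finset.Ioc a (a + T), b i := by
        refine sum_lintegral_enorm_sum_sq_le
          (X := fun (t : ℕ) i => truncationError (a + t) i (F i))
          (fun _ i => hF.aestronglyMeasurable_truncationError _ i)
          (w := fun (t : ℕ) i => ρ ^ (i - (a + t)).natAbs) (fun _ _ => pow_ne_zero _ hρ)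
          hrow hcolumn fun t _ i _ => ?_
        simpa only [ENNReal.coe_pow] using hF.lintegral_truncationError_sq_le (a + t) i
    _ ≤ (∑' m : ℤ, (ρ : ℝ≥0∞) ^ m.natAbs) ^ 2 * ∑' i, b i := by
        rw [sq]
        gcongr
        exact ENNReal.sum_le_tsum _

end IsScaleLocalized

end ScaleLocalized

section JumpCounting

/-- The truncated bilinear sum `∑_{m < i < j ≤ n} F_i G_j`. -/
def bilinearSum {R : Type*} [Ring R] (F G : ℤ → R) (m n : ℤ) : R :=
  ∑ j ∈ Finset.Ioc m n, ∑ i ∈ Finset.Ioo m j, F i * G j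

lemma bilinearSum_smul_smul {R : Type*} [CommRing R] (c d : R) (F G : ℤ → R) (m n : ℤ) :
    bilinearSum (fun i => c • F i) (fun j => d • G j) m n = (c * d) * bilinearSum F G m n := by
  simp only [bilinearSum, Finset.mul_sum, smul_eq_mul, mul_mul_mul_comm]

lemma coe_encard_le_of_forall_card_le {α : Type*} {s : Set α} {c : ℝ≥0∞}
    (h : ∀ S : Finset α, ↑S ⊆ s → (S.card : ℝ≥0∞) ≤ c) : (s.encard : ℝ≥0∞) ≤ c := by
  rcases s.finite_or_infinite with hs | hs
  · simpa [hs.encard_eq_coe_toFinset_card] using h hs.toFinset (by simp)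
  · suffices c = ∞ by simp [this]
    refine ENNReal.eq_top_of_forall_nnreal_le fun r => ?_
    obtain ⟨n, hn⟩ := exists_nat_ge r
    obtain ⟨S, hS, rfl⟩ := hs.exists_subset_card_eq n
    exact (by exact_mod_cast hn : (r : ℝ≥0∞) ≤ S.card).trans (h S hS)

variable {𝕜 : Type*} [RCLike 𝕜]

lemma paraproduct_partialSum (F G : ℤ → ℝ → 𝕜) (a : ℤ) {m n : ℕ} (hmn : m ≤ n) (x : ℝ) :
    paraproduct (partialSum F a · x) (partialSum G a · x) m n =
      bilinearSum (F · x) (G · x) (a + m) (a + n) := by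
  induction n, hmn using Nat.le_induction with
  | base => simp [bilinearSum]
  | succ n hmn ih =>
    have hIoc : Finset.Ioc (a + m) (a + (n + 1 : ℕ)) =
        insert (a + n + 1) (Finset.Ioc (a + m) (a + n)) := by
      ext i
      simp only [Finset.mem_Ioc, Finset.mem_insert]
      lia
    rw [paraproduct_succ _ _ hmn, ih, partialSum_succ, add_sub_cancel_left,
      partialSum_sub_partialSum F a hmn, bilinearSum, bilinearSum, hIoc,
      Finset.sum_insert (by simp), add_comm, Finset.sum_mul]

/-- The total jump cost over the scales `-L < i ≤ L` of the partial sums of `F` and `G`, with their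
dyadic averages as the approximating martingales. -/
def windowCost (F G : ℤ → ℝ → 𝕜) (L : ℕ) (x : ℝ) : ℝ≥0 :=
  ∑ t ∈ Finset.range (2 * L), jumpCost (partialSum F (-L) · x) (partialSum G (-L) · x)
    (fun t => dyadicAverage (-L + t) (partialSum F (-L) (2 * L)) x)
    (fun t => dyadicAverage (-L + t) (partialSum G (-L) (2 * L)) x) t

lemma card_le_windowCost (F G : ℤ → ℝ → 𝕜) {N : ℕ → ℤ} (hN : Monotone N) (x : ℝ) {L : ℕ}
    {S : Finset ℕ} (hL : ∀ k ∈ S, -(L : ℤ) ≤ N k ∧ N (k + 1) ≤ L)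
    (hS : ∀ k ∈ S, 1 < ‖bilinearSum (F · x) (G · x) (N k) (N (k + 1))‖) :
    (S.card : ℝ≥0) ≤ windowCost F G L x := by
  refine card_le_sum_jumpCost _ _ (n := fun k => (N k + L).toNat)
    (fun k l hkl => Int.toNat_le_toNat (by gcongr; exact hN hkl)) fun k hk => ?_
  obtain ⟨hlower, hupper⟩ := hL k hk
  have hstep : N k ≤ N (k + 1) := hN k.le_succ
  refine ⟨by lia, ?_⟩
  rw [paraproduct_partialSum F G _ (by lia), Int.toNat_of_nonneg (by lia),
    Int.toNat_of_nonneg (by lia), neg_add_cancel_comm_assoc, neg_add_cancel_comm_assoc]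
  exact hS k hk

lemma encard_le_liminf_windowCost (F G : ℤ → ℝ → 𝕜) {N : ℕ → ℤ} (hN : Monotone N) (x : ℝ) :
    ({k | 1 < ‖bilinearSum (F · x) (G · x) (N k) (N (k + 1))‖}.encard : ℝ≥0∞) ≤
      Filter.liminf (fun L => (windowCost F G L x : ℝ≥0∞)) Filter.atTop := by
  refine coe_encard_le_of_forall_card_le fun S hS => ?_
  refine Filter.le_liminf_of_le (by isBoundedDefault) ?_
  have hwindow (k : ℕ) (_ : k ∈ S) :
      ∀ᶠ L : ℕ in Filter.atTop, -(L : ℤ) ≤ N k ∧ N (k + 1) ≤ L := by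
    filter_upwards [Filter.eventually_ge_atTop ((N k).natAbs + (N (k + 1)).natAbs)] with L hL
    lia
  filter_upwards [(Filter.eventually_all_finset S).2 hwindow] with L hL
  exact_mod_cast card_le_windowCost F G hN x hL hS

variable {ρ : ℝ≥0} {F G : ℤ → ℝ → 𝕜} {b c : ℤ → ℝ≥0∞}

lemma aemeasurable_windowCost (hF : IsScaleLocalized ρ F b) (hG : IsScaleLocalized ρ G c) (L : ℕ) :
    AEMeasurable (windowCost F G L) := by
  have hmart {F : ℤ → ℝ → 𝕜} {b : ℤ → ℝ≥0∞} (hF : IsScaleLocalized ρ F b) :=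
    hF.isDyadicMartingale_dyadicAverage_partialSum (-L) (2 * L)
  have hmeas {F : ℤ → ℝ → 𝕜} {b : ℤ → ℝ≥0∞} (hF : IsScaleLocalized ρ F b) (t : ℕ) :=
    ((hmart hF).isDyadicStep t).measurable.aestronglyMeasurable (μ := volume)
  exact Finset.aemeasurable_fun_sum _ fun t _ => aemeasurable_jumpCost
    (fun t => (hF.locallyIntegrable_partialSum _ t).aestronglyMeasurable)
    (fun t => (hG.locallyIntegrable_partialSum _ t).aestronglyMeasurable)
    (hmeas hF) (hmeas hG) (hmart hF) (hmart hG) t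

lemma lintegral_windowCost_le (hρ : ρ ≠ 0) (hF : IsScaleLocalized ρ F b)
    (hG : IsScaleLocalized ρ G c) (L : ℕ) :
    ∫⁻ x, windowCost F G L x ≤ 1220 * (1 + (∑' m : ℤ, (ρ : ℝ≥0∞) ^ m.natAbs) ^ 2) *
      (∑' i, b i + ∑' j, c j) := by
  have henergy {F : ℤ → ℝ → 𝕜} {b : ℤ → ℝ≥0∞} (hF : IsScaleLocalized ρ F b) :=
    add_le_add (hF.squareVariation_partialSum_le (-L) (2 * L))
      (hF.approxError_partialSum_le hρ (-L) (2 * L))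
  simp only [windowCost, ENNReal.ofNNReal_finsetSum]
  refine (lintegral_sum_jumpCost_le
    (fun t => (hF.locallyIntegrable_partialSum _ t).aestronglyMeasurable)
    (fun t => (hG.locallyIntegrable_partialSum _ t).aestronglyMeasurable)
    (hF.isDyadicMartingale_dyadicAverage_partialSum _ _)
    (hG.isDyadicMartingale_dyadicAverage_partialSum _ _) (2 * L)).trans ?_
  refine (mul_le_mul_right (add_le_add (henergy hF) (henergy hG)) _).trans_eq ?_
  ring

theorem lintegral_encard_one_lt_bilinearSum_le (hρ : ρ ≠ 0) (hF : IsScaleLocalized ρ F b)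
    (hG : IsScaleLocalized ρ G c) {N : ℕ → ℝ → ℤ} (hN : ∀ x, Monotone (N · x)) :
    ∫⁻ x, ({k | 1 < ‖bilinearSum (F · x) (G · x) (N k x) (N (k + 1) x)‖}.encard : ℝ≥0∞) ≤
      1220 * (1 + (∑' m : ℤ, (ρ : ℝ≥0∞) ^ m.natAbs) ^ 2) * (∑' i, b i + ∑' j, c j) :=
  calc _ ≤ ∫⁻ x, Filter.liminf (fun L => (windowCost F G L x : ℝ≥0∞)) Filter.atTop :=
        lintegral_mono fun x => encard_le_liminf_windowCost F G (hN x) x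
    _ ≤ Filter.liminf (fun L => ∫⁻ x, windowCost F G L x) Filter.atTop :=
        lintegral_liminf_le' fun L => (aemeasurable_windowCost hF hG L).coe_nnreal_ennreal
    _ ≤ _ := Filter.liminf_le_of_le (by isBoundedDefault) fun _ hb =>
        hb.exists.elim fun L hL => hL.trans (lintegral_windowCost_le hρ hF hG L)

lemma le_two_mul_sqrt_mul_sqrt {X K a b : ℝ≥0∞} (hK : K ≠ ∞) (ha : a ≠ ∞) (hb : b ≠ ∞)
    (h : ∀ s : ℝ≥0, s ≠ 0 → X ≤ K * (s * a + s⁻¹ * b)) :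
    X ≤ 2 * K * a ^ (1 / 2 : ℝ) * b ^ (1 / 2 : ℝ) := by
  lift K to ℝ≥0 using hK
  lift a to ℝ≥0 using ha
  lift b to ℝ≥0 using hb
  have hperturbed (ε : ℝ≥0) (hε : 0 < ε) :
      X ≤ (2 * K * NNReal.sqrt (a + ε) * NNReal.sqrt (b + ε) : ℝ≥0) := by
    set α := NNReal.sqrt (a + ε)
    set β := NNReal.sqrt (b + ε)
    have hα : 0 < α := NNReal.sqrt_pos.2 (by positivity)
    have hβ : 0 < β := NNReal.sqrt_pos.2 (by positivity)
    have ha_le : a ≤ α ^ 2 := by simp [α]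
    have hb_le : b ≤ β ^ 2 := by simp [β]
    refine (h (β / α) (by positivity)).trans ?_
    norm_cast
    calc K * (β / α * a + (β / α)⁻¹ * b) ≤ K * (β / α * α ^ 2 + (β / α)⁻¹ * β ^ 2) := by gcongr
      _ = 2 * K * α * β := by field_simp; ring
  have hlim : Filter.Tendsto
      (fun ε => ((2 * K * NNReal.sqrt (a + ε) * NNReal.sqrt (b + ε) : ℝ≥0) : ℝ≥0∞))
      (nhdsWithin 0 (Set.Ioi 0)) (nhds (2 * K * NNReal.sqrt a * NNReal.sqrt b : ℝ≥0)) := by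
    refine (Continuous.tendsto' ?_ _ _ (by simp)).mono_left nhdsWithin_le_nhds
    fun_prop
  refine (ge_of_tendsto hlim (Filter.eventually_of_mem self_mem_nhdsWithin hperturbed)).trans_eq ?_
  simp only [← ENNReal.coe_rpow_of_nonneg _ one_half_pos.le, ← NNReal.sqrt_eq_rpow]
  push_cast
  rfl

theorem lintegral_encard_lt_bilinearSum_le (hρ : ρ ≠ 0) (hρ_lt : ρ < 1)
    (hF : IsScaleLocalized ρ F b) (hG : IsScaleLocalized ρ G c) (hb : ∑' i, b i ≠ ∞)
    (hc : ∑' j, c j ≠ ∞) {N : ℕ → ℝ → ℤ} (hN : ∀ x, Monotone (N · x)) {lam : ℝ≥0}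
    (hlam : lam ≠ 0) :
    ∫⁻ x, ({k | lam < ‖bilinearSum (F · x) (G · x) (N k x) (N (k + 1) x)‖}.encard : ℝ≥0∞) ≤
      2 * (1220 * (1 + (∑' m : ℤ, (ρ : ℝ≥0∞) ^ m.natAbs) ^ 2) * (lam : ℝ≥0∞)⁻¹) *
        (∑' i, b i) ^ (1 / 2 : ℝ) * (∑' j, c j) ^ (1 / 2 : ℝ) := by
  set S := ∑' m : ℤ, (ρ : ℝ≥0∞) ^ m.natAbs
  have hS : S ≠ ∞ := tsum_pow_natAbs_ne_top hρ_lt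
  have hlam_inv : (lam : ℝ≥0∞)⁻¹ ≠ ∞ := inv_ne_top.2 (coe_ne_zero.2 hlam)
  refine le_two_mul_sqrt_mul_sqrt (by finiteness) hb hc fun s hs => ?_
  set p := NNReal.sqrt (lam⁻¹ * s)
  set q := NNReal.sqrt (lam⁻¹ * s⁻¹)
  have hpq : p * q = lam⁻¹ := by
    rw [← NNReal.sqrt_mul, mul_mul_mul_comm, mul_inv_cancel₀ hs, mul_one, NNReal.sqrt_mul_self]
  have hlevel (x : ℝ) (k : ℕ) :
      1 < ‖bilinearSum (fun i => ((p : ℝ) : 𝕜) • F i x) (fun j => ((q : ℝ) : 𝕜) • G j x)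
        (N k x) (N (k + 1) x)‖ ↔ lam < ‖bilinearSum (F · x) (G · x) (N k x) (N (k + 1) x)‖ := by
    rw [bilinearSum_smul_smul, ← RCLike.ofReal_mul, ← NNReal.coe_mul, hpq, norm_mul,
      RCLike.norm_ofReal, NNReal.abs_eq, NNReal.coe_inv, inv_mul_eq_div, one_lt_div (by positivity)]
  have hscaled := lintegral_encard_one_lt_bilinearSum_le hρ (hF.const_smul ((p : ℝ) : 𝕜))
    (hG.const_smul ((q : ℝ) : 𝕜)) hN
  simp only [Pi.smul_apply, hlevel, ENNReal.tsum_mul_left] at hscaled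
  refine hscaled.trans_eq ?_
  have hnorm (r : ℝ≥0) : ‖((NNReal.sqrt r : ℝ) : 𝕜)‖ₑ ^ 2 = r := by
    rw [enorm_eq_nnnorm, ← ENNReal.coe_pow, ENNReal.coe_inj]
    ext
    simp
  rw [hnorm, hnorm, ENNReal.coe_mul, ENNReal.coe_mul, coe_inv hlam, coe_inv hs]
  ring

end JumpCounting

section Dilates

lemma lintegral_comp_mul_left {a : ℝ} (ha : a ≠ 0) (h : ℝ → ℝ≥0∞) :
    ∫⁻ x, h (a * x) = ENNReal.ofReal |a⁻¹| * ∫⁻ x, h x := by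
  have hmap := lintegral_map_equiv (μ := volume) h (Homeomorph.mulLeft₀ a ha).toMeasurableEquiv
  simp only [Homeomorph.toMeasurableEquiv_coe, Homeomorph.coe_mulLeft₀,
    Real.map_volume_mul_left ha, lintegral_smul_measure, smul_eq_mul] at hmap
  exact hmap.symm

lemma lintegral_zpow_mul_comp_zpow_mul (i : ℤ) (h : ℝ → ℝ≥0∞) :
    ∫⁻ x, ENNReal.ofReal (2 ^ i) * h (2 ^ i * x) = ∫⁻ x, h x := by
  have hpos : (0 : ℝ) < 2 ^ i := by positivity
  rw [lintegral_const_mul' _ _ ofReal_ne_top, lintegral_comp_mul_left hpos.ne', ← mul_assoc,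
    ← ofReal_mul hpos.le, abs_of_pos (inv_pos.2 hpos), mul_inv_cancel₀ hpos.ne', ofReal_one,
    one_mul]

lemma exists_schwartzMap_coe_eq_dilate (φ : SchwartzMap ℝ ℂ) (i : ℤ) :
    ∃ ψ : SchwartzMap ℝ ℂ, ⇑ψ = dilate φ i := by
  refine ⟨((2 : ℝ) ^ i) • SchwartzMap.compCLMOfContinuousLinearEquiv ℂ
    (ContinuousLinearEquiv.unitsEquivAut ℝ (Units.mk0 ((2 : ℝ) ^ i) (by positivity))) φ, ?_⟩
  ext x
  simp [dilate, mul_comm]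

lemma enorm_dilate (φ : SchwartzMap ℝ ℂ) (i : ℤ) (x : ℝ) :
    ‖dilate φ i x‖ₑ = ENNReal.ofReal (2 ^ i) * ‖φ (2 ^ i * x)‖ₑ := by
  rw [dilate, enorm_smul, Real.enorm_of_nonneg (by positivity)]

lemma integral_dilate (φ : SchwartzMap ℝ ℂ) (i : ℤ) : ∫ x, dilate φ i x = ∫ x, φ x := by
  have hpos : (0 : ℝ) < 2 ^ i := by positivity
  simp only [dilate]
  rw [integral_smul, Measure.integral_comp_mul_left, abs_of_pos (inv_pos.2 hpos),
    smul_inv_smul₀ hpos.ne']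

lemma lintegral_enorm_dilate (φ : SchwartzMap ℝ ℂ) (i : ℤ) :
    ∫⁻ x, ‖dilate φ i x‖ₑ = ∫⁻ x, ‖φ x‖ₑ := by
  simp only [enorm_dilate]
  exact lintegral_zpow_mul_comp_zpow_mul i fun x => ‖φ x‖ₑ

lemma lintegral_enorm_mul_enorm_dilate (φ : SchwartzMap ℝ ℂ) (i : ℤ) :
    ∫⁻ x, ‖x‖ₑ * ‖dilate φ i x‖ₑ = ENNReal.ofReal (2 ^ (-i)) * ∫⁻ x, ‖x‖ₑ * ‖φ x‖ₑ := by
  have hinv : ENNReal.ofReal (2 ^ (-i)) * ENNReal.ofReal (2 ^ i) = 1 := by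
    rw [← ofReal_mul (by positivity), ← zpow_add₀ two_ne_zero, neg_add_cancel, zpow_zero,
      ofReal_one]
  have hx (x : ℝ) : ‖x‖ₑ = ENNReal.ofReal (2 ^ (-i)) * ‖(2 : ℝ) ^ i * x‖ₑ := by
    rw [enorm_mul, Real.enorm_of_nonneg (r := 2 ^ i) (by positivity), ← mul_assoc, hinv, one_mul]
  rw [← lintegral_zpow_mul_comp_zpow_mul i fun x => ‖x‖ₑ * ‖φ x‖ₑ,
    ← lintegral_const_mul' _ _ ofReal_ne_top]
  refine lintegral_congr fun x => ?_
  rw [enorm_dilate, hx x]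
  ring

lemma lintegral_enorm_mul_enorm_ne_top (φ : SchwartzMap ℝ ℂ) : ∫⁻ x, ‖x‖ₑ * ‖φ x‖ₑ ≠ ∞ := by
  have hint := (φ.integrable_pow_mul volume 1).2.ne
  simpa only [pow_one, enorm_mul, enorm_norm] using hint

lemma exists_norm_sub_le_of_abs_sub_le_one (φ : SchwartzMap ℝ ℂ) :
    ∃ C : ℝ, 0 ≤ C ∧ ∀ u v : ℝ, |u - v| ≤ 1 →
      ‖φ u - φ v‖ ≤ |u - v| * (C * (1 + u ^ 2)⁻¹) := by
  obtain ⟨C₀, hC₀_pos, hC₀⟩ := φ.decay 0 1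
  obtain ⟨C₂, hC₂_pos, hC₂⟩ := φ.decay 2 1
  simp only [norm_iteratedFDeriv_eq_norm_iteratedDeriv, iteratedDeriv_one, pow_zero, one_mul,
    Real.norm_eq_abs, sq_abs] at hC₀ hC₂
  refine ⟨3 * (C₀ + C₂), by positivity, fun u v huv => ?_⟩
  have hderiv : ∀ s ∈ Metric.closedBall u 1,
      ‖deriv φ s‖ ≤ 3 * (C₀ + C₂) * (1 + u ^ 2)⁻¹ := by
    intro s hs
    have hsu : |s - u| ^ 2 ≤ 1 := pow_le_one₀ (abs_nonneg _) hs
    rw [sq_abs] at hsu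
    have hu : 1 + u ^ 2 ≤ 3 * (1 + s ^ 2) := by nlinarith [sq_nonneg (2 * s - u)]
    rw [← div_eq_mul_inv, le_div_iff₀ (by positivity)]
    calc ‖deriv φ s‖ * (1 + u ^ 2) ≤ ‖deriv φ s‖ * (3 * (1 + s ^ 2)) := by gcongr
      _ = 3 * (‖deriv φ s‖ + s ^ 2 * ‖deriv φ s‖) := by ring
      _ ≤ 3 * (C₀ + C₂) := by gcongr; exacts [hC₀ s, hC₂ s]
  have hv : v ∈ Metric.closedBall u 1 := by
    rwa [Metric.mem_closedBall, Real.dist_eq, abs_sub_comm]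
  rw [mul_comm, ← Real.norm_eq_abs]
  exact (convex_closedBall u 1).norm_image_sub_le_of_norm_deriv_le
    (fun s _ => φ.differentiableAt) hderiv hv (Metric.mem_closedBall_self zero_le_one)

lemma exists_enorm_dilate_sub_dilate_le (φ : SchwartzMap ℝ ℂ) :
    ∃ ψ : ℝ → ℝ≥0∞, Measurable ψ ∧ ∫⁻ u, ψ u ≠ ∞ ∧ ∀ i n : ℤ, i ≤ n →
      ∀ u v : ℝ, |u - v| ≤ 2 ^ (-n) → ‖dilate φ i u - dilate φ i v‖ₑ ≤
        ENNReal.ofReal (2 ^ (i - n)) * (ENNReal.ofReal (2 ^ i) * ψ (2 ^ i * u)) := by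
  obtain ⟨C, hC, hφ⟩ := exists_norm_sub_le_of_abs_sub_le_one φ
  refine ⟨fun u => ENNReal.ofReal (C * (1 + u ^ 2)⁻¹), by fun_prop,
    (integrable_inv_one_add_sq.const_mul C).lintegral_lt_top.ne, fun i n hin u v huv => ?_⟩
  have hscaled : |2 ^ i * u - 2 ^ i * v| ≤ (2 : ℝ) ^ (i - n) := by
    rw [← mul_sub, abs_mul, abs_of_pos (by positivity), sub_eq_add_neg i, zpow_add₀ two_ne_zero]
    gcongr
  have hone : (2 : ℝ) ^ (i - n) ≤ 1 := zpow_le_one_of_nonpos₀ one_le_two (by lia)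
  rw [← ofReal_mul (by positivity), ← ofReal_mul (by positivity), ← ofReal_norm, dilate, dilate,
    ← smul_sub, norm_smul, Real.norm_of_nonneg (by positivity), mul_left_comm]
  gcongr
  exact (hφ _ _ (hscaled.trans hone)).trans (by gcongr)

end Dilates

section LittlewoodPaley

lemma ofReal_two_zpow_eq_sqrt_pow_natAbs_sq {m : ℤ} (hm : m ≤ 0) :
    ENNReal.ofReal (2 ^ m) = ((NNReal.sqrt (1 / 2) : ℝ≥0∞) ^ m.natAbs) ^ 2 := by
  obtain ⟨k, rfl⟩ := Int.exists_eq_neg_ofNat hm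
  rw [← pow_mul, mul_comm, pow_mul, ← coe_pow, NNReal.sq_sqrt, Int.natAbs_neg, Int.natAbs_natCast,
    ← coe_pow, ENNReal.ofReal, ENNReal.coe_inj]
  ext
  simp

variable {φ : SchwartzMap ℝ ℂ} {f : ℝ → ℂ}

lemma lintegral_truncationError_conv_dilate_sq_le_of_le {ψ : ℝ → ℝ≥0∞} (hψ : Measurable ψ)
    {i n : ℤ} (hin : i ≤ n)
    (hφψ : ∀ u v : ℝ, |u - v| ≤ 2 ^ (-n) → ‖dilate φ i u - dilate φ i v‖ₑ ≤
      ENNReal.ofReal (2 ^ (i - n)) * (ENNReal.ofReal (2 ^ i) * ψ (2 ^ i * u)))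
    (hf : MemLp f 2) :
    ∫⁻ x, ‖truncationError n i (conv (dilate φ i) f) x‖ₑ ^ 2 ≤
      ENNReal.ofReal (2 ^ (i - n)) * ((∫⁻ u, ψ u) ^ 2 * ∫⁻ y, ‖f y‖ₑ ^ 2) := by
  obtain ⟨Φ, hΦ⟩ := exists_schwartzMap_coe_eq_dilate φ i
  have hmajorant : ∫⁻ u, ENNReal.ofReal (2 ^ (i - n)) * (ENNReal.ofReal (2 ^ i) * ψ (2 ^ i * u)) =
      ENNReal.ofReal (2 ^ (i - n)) * ∫⁻ u, ψ u := by
    rw [lintegral_const_mul' _ _ ofReal_ne_top, lintegral_zpow_mul_comp_zpow_mul]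
  have hone : ENNReal.ofReal (2 ^ (i - n)) ≤ 1 :=
    ofReal_le_one.2 (zpow_le_one_of_nonpos₀ one_le_two (by lia))
  simp only [truncationError, if_pos hin, ← hΦ] at hφψ ⊢
  refine (lintegral_conv_sub_dyadicAverage_sq_le Φ.continuous.measurable Φ.integrable
    (Φ.memLp 2) hf (by fun_prop) hφψ).trans ?_
  rw [hmajorant, mul_pow, mul_assoc]
  gcongr
  exact pow_le_of_le_one zero_le hone two_ne_zero

lemma lintegral_truncationError_conv_dilate_sq_le_of_lt (hφ : ∫ x, φ x = 0) {i n : ℤ}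
    (hni : n < i) (hf : MemLp f 2) :
    ∫⁻ x, ‖truncationError n i (conv (dilate φ i) f) x‖ₑ ^ 2 ≤
      ENNReal.ofReal (2 ^ (n - i)) *
        (4 * (∫⁻ z, ‖z‖ₑ * ‖φ z‖ₑ) * (∫⁻ u, ‖φ u‖ₑ) * ∫⁻ y, ‖f y‖ₑ ^ 2) := by
  obtain ⟨Φ, hΦ⟩ := exists_schwartzMap_coe_eq_dilate φ i
  have hΦ_zero : ∫ u, Φ u = 0 := by rw [hΦ, integral_dilate, hφ]
  simp only [truncationError, if_neg hni.not_ge, zero_sub, enorm_neg, ← hΦ]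
  refine (lintegral_dyadicAverage_conv_sq_le Φ.continuous.measurable Φ.integrable (Φ.memLp 2)
    hΦ_zero hf n).trans_eq ?_
  rw [hΦ, lintegral_enorm_mul_enorm_dilate, lintegral_enorm_dilate, sub_eq_add_neg,
    zpow_add₀ two_ne_zero, ofReal_mul (by positivity)]
  ring

theorem exists_isScaleLocalized_conv_dilate (hφ : ∫ x, φ x = 0) :
    ∃ K : ℝ≥0, ∀ f : ℤ → ℝ → ℂ, (∀ i, MemLp (f i) 2) →
      IsScaleLocalized (NNReal.sqrt (1 / 2)) (fun i => conv (dilate φ i) (f i))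
        fun i => K * eLpNorm (f i) 2 volume ^ (2 : ℝ) := by
  obtain ⟨ψ, hψ, hψ_top, hφψ⟩ := exists_enorm_dilate_sub_dilate_le φ
  have hφ_top : ∫⁻ u, ‖φ u‖ₑ ≠ ∞ := φ.integrable.2.ne
  have hmoment_top := lintegral_enorm_mul_enorm_ne_top φ
  set c := ∫⁻ u, ‖φ u‖ₑ
  set M := ∫⁻ z, ‖z‖ₑ * ‖φ z‖ₑ
  have hK_top : c ^ 2 + (∫⁻ u, ψ u) ^ 2 + 4 * M * c ≠ ∞ := by finiteness
  lift c ^ 2 + (∫⁻ u, ψ u) ^ 2 + 4 * M * c to ℝ≥0 using hK_top with K hK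
  refine ⟨K, fun f hf => ⟨fun i => ?_, fun i => ?_, fun n i => ?_⟩⟩
  · obtain ⟨Φ, hΦ⟩ := exists_schwartzMap_coe_eq_dilate φ i
    exact hΦ ▸ locallyIntegrable_conv Φ.continuous.measurable Φ.integrable (hf i)
  · obtain ⟨Φ, hΦ⟩ := exists_schwartzMap_coe_eq_dilate φ i
    have hconv := lintegral_enorm_conv_sq_le Φ.continuous.measurable (hf i).1
    rw [hΦ, lintegral_enorm_dilate] at hconv
    rw [eLpNorm_two_sq, hK]
    refine hconv.trans ?_
    gcongr
    exact le_self_add.trans le_self_add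
  · rw [eLpNorm_two_sq, hK]
    rcases le_or_gt i n with hin | hni
    · rw [← ofReal_two_zpow_eq_sqrt_pow_natAbs_sq (m := i - n) (by lia)]
      refine (lintegral_truncationError_conv_dilate_sq_le_of_le hψ hin (hφψ i n hin)
        (hf i)).trans ?_
      gcongr
      exact le_add_self.trans le_self_add
    · rw [← Int.natAbs_neg, neg_sub,
        ← ofReal_two_zpow_eq_sqrt_pow_natAbs_sq (m := n - i) (by lia)]
      refine (lintegral_truncationError_conv_dilate_sq_le_of_lt hφ hni (hf i)).trans ?_
      gcongr
      exact le_add_self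

lemma fourier_apply_zero (f : ℝ → ℂ) : 𝓕 f 0 = ∫ x, f x := by
  simp [Real.fourier_eq]

end LittlewoodPaley

theorem diagonal_weak_L2_jump_estimate_general (φ : SchwartzMap ℝ ℂ) (hφ : ∫ x, φ x = 0) :
    ∃ C : ℝ≥0, 0 < C ∧
      ∀ (f g : ℤ → ℝ → ℂ),
      (∀ i, MemLp (f i) 2) → (∀ j, MemLp (g j) 2) →
      (∑' i : ℤ, (eLpNorm (f i) 2 volume) ^ (2 : ℝ)) < ⊤ →
      (∑' j : ℤ, (eLpNorm (g j) 2 volume) ^ (2 : ℝ)) < ⊤ →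
      ∀ (Nk : ℕ → ℝ → ℤ), (∀ k x, Nk k x ≤ Nk (k + 1) x) →
      ∀ lam : ℝ, 0 < lam →
      (∫⁻ x : ℝ,
          (({k : ℕ | lam < norm
              (∑ j ∈ Finset.Ioc (Nk k x) (Nk (k + 1) x),
                ∑ i ∈ Finset.Ioo (Nk k x) j,
                  conv (dilate φ i) (f i) x * conv (dilate φ j) (g j) x)}.encard
            : ℝ≥0∞)))
        ≤ (C : ℝ≥0∞) * (ENNReal.ofReal lam)⁻¹ *
            (∑' i : ℤ, (eLpNorm (f i) 2 volume) ^ (2 : ℝ)) ^ ((1 : ℝ) / 2) *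
            (∑' j : ℤ, (eLpNorm (g j) 2 volume) ^ (2 : ℝ)) ^ ((1 : ℝ) / 2) := by
  obtain ⟨K, hK⟩ := exists_isScaleLocalized_conv_dilate hφ
  have hρ_lt : NNReal.sqrt (1 / 2) < 1 := by
    simpa only [NNReal.sqrt_one] using NNReal.sqrt_lt_sqrt.2 (NNReal.half_lt_self one_ne_zero)
  have hS_top := tsum_pow_natAbs_ne_top hρ_lt
  lift ∑' m : ℤ, (NNReal.sqrt (1 / 2) : ℝ≥0∞) ^ m.natAbs to ℝ≥0 using hS_top with S hS
  refine ⟨2 * (1220 * (1 + S ^ 2)) * K + 1, by positivity, ?_⟩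
  intro f g hf hg hf_top hg_top Nk hNk lam hlam
  lift lam to ℝ≥0 using hlam.le
  have hjump := lintegral_encard_lt_bilinearSum_le (by simp) hρ_lt (hK f hf) (hK g hg)
    (by rw [ENNReal.tsum_mul_left]; finiteness) (by rw [ENNReal.tsum_mul_left]; finiteness)
    (fun x => monotone_nat_of_le_succ (hNk · x)) (by exact_mod_cast hlam.ne')
  rw [← hS, ENNReal.tsum_mul_left, ENNReal.tsum_mul_left,
    mul_rpow_of_nonneg _ _ one_half_pos.le, mul_rpow_of_nonneg _ _ one_half_pos.le] at hjump
  have hK_sqrt : (K : ℝ≥0∞) ^ (1 / 2 : ℝ) * (K : ℝ≥0∞) ^ (1 / 2 : ℝ) = K := by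
    rw [← rpow_add_of_nonneg _ _ one_half_pos.le one_half_pos.le, add_halves, rpow_one]
  set A := (∑' i : ℤ, (eLpNorm (f i) 2 volume) ^ (2 : ℝ)) ^ ((1 : ℝ) / 2)
  set B := (∑' j : ℤ, (eLpNorm (g j) 2 volume) ^ (2 : ℝ)) ^ ((1 : ℝ) / 2)
  refine hjump.trans ?_
  calc 2 * (1220 * (1 + (S : ℝ≥0∞) ^ 2) * (lam : ℝ≥0∞)⁻¹) * (K ^ (1 / 2 : ℝ) * A) *
        (K ^ (1 / 2 : ℝ) * B)
      = 2 * (1220 * (1 + (S : ℝ≥0∞) ^ 2)) * (K ^ (1 / 2 : ℝ) * K ^ (1 / 2 : ℝ)) *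
          (lam : ℝ≥0∞)⁻¹ * A * B := by ring
    _ ≤ (2 * (1220 * (1 + S ^ 2)) * K + 1 : ℝ≥0) * (ENNReal.ofReal lam)⁻¹ * A * B := by
      rw [hK_sqrt, ofReal_coe_nnreal]
      gcongr
      push_cast
      exact le_self_add

/-- The diagonal weak-type `L² × L²` jump-counting estimate at the core of the
bilinear theorem (`r = s = p = q = 2`, `t = 1`). -/
theorem diagonal_weak_L2_jump_estimate
    (Nb : ℝ) (hNb : 0 < Nb) (φ : SchwartzMap ℝ ℂ)
    (hφ : ∀ ξ : ℝ, 𝓕 (⇑φ) ξ ≠ 0 → (2 : ℝ) ^ (-Nb) < |ξ| ∧ |ξ| < (2 : ℝ) ^ Nb) :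
    ∃ C : ℝ≥0, 0 < C ∧
      ∀ (f g : ℤ → ℝ → ℂ),
      (∀ i, MemLp (f i) 2) → (∀ j, MemLp (g j) 2) →
      (∑' i : ℤ, (eLpNorm (f i) 2 volume) ^ (2 : ℝ)) < ⊤ →
      (∑' j : ℤ, (eLpNorm (g j) 2 volume) ^ (2 : ℝ)) < ⊤ →
      ∀ (Nk : ℕ → ℝ → ℤ), IsJumpCollection Nk →
      ∀ lam : ℝ, 0 < lam →
      (∫⁻ x : ℝ,
          (({k : ℕ | lam < norm
              (∑ j ∈ Finset.Ioc (Nk k x) (Nk (k + 1) x),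
                ∑ i ∈ Finset.Ioo (Nk k x) j,
                  conv (dilate φ i) (f i) x * conv (dilate φ j) (g j) x)}.encard
            : ℝ≥0∞)))
        ≤ (C : ℝ≥0∞) * (ENNReal.ofReal lam)⁻¹ *
            (∑' i : ℤ, (eLpNorm (f i) 2 volume) ^ (2 : ℝ)) ^ ((1 : ℝ) / 2) *
            (∑' j : ℤ, (eLpNorm (g j) 2 volume) ^ (2 : ℝ)) ^ ((1 : ℝ) / 2) := by
  have hφ_zero : ∫ x, φ x = 0 := by
    rw [← fourier_apply_zero]
    by_contra hne
    exact (Real.rpow_nonneg zero_le_two (-Nb)).not_gt (abs_zero (α := ℝ) ▸ (hφ 0 hne).1)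
  obtain ⟨C, hC, hjump⟩ := diagonal_weak_L2_jump_estimate_general φ hφ_zero
  exact ⟨C, hC, fun f g hf hg hf_top hg_top Nk hNk lam hlam =>
    hjump f g hf hg hf_top hg_top Nk hNk.2 lam hlam⟩

end
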